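/- arXiv:0905.1045 — 6 statements merged into one kernel-verified Lean document; each statement's English description precedes it below -/
import Mathlib

section
/- Let Σ = {a_1, …, a_m} with pairwise distinct symbols a_i, and let G be a context-free grammar in Chomsky normal form over Σ such that every variable of G is useful and L(G) ⊆ a_1^* a_2^* ⋯ a_m^*. Then for each variable A of G there exists an index l with 1 ≤ l ≤ m such that for all terminal strings u, v with A ⇒* u A v one has u ∈ a_l^*; moreover, if there exists at least one such derivation A ⇒* u A v with u ≠ ε, then this index l is unique. Symmetrically, there exists an index r with 1 ≤ r ≤ m such that for all terminal strings u, v with A ⇒* u A v one has v ∈ a_r^*, and r is unique if some such derivation has v ≠ ε. -/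
/-- A context-free grammar is in Chomsky normal form if every rule has the form
`A → B C` (two nonterminals) or `A → a` (a single terminal). -/
def ContextFreeGrammar.IsCNF {T : Type} (g : ContextFreeGrammar T) : Prop :=
  ∀ r ∈ g.rules,
    (∃ B C : g.NT, r.output = [Symbol.nonterminal B, Symbol.nonterminal C]) ∨
    (∃ t : T, r.output = [Symbol.terminal t])

/-- A variable `A` is useful: `S ⇒* u A w` and `A ⇒* v` for some terminal strings. -/
def ContextFreeGrammar.IsUseful {T : Type} (g : ContextFreeGrammar T) (A : g.NT) : Prop :=
  (∃ u w : List T,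
    g.Derives [Symbol.nonterminal g.initial]
      (u.map Symbol.terminal ++ [Symbol.nonterminal A] ++ w.map Symbol.terminal)) ∧
  (∃ v : List T, g.Derives [Symbol.nonterminal A] (v.map Symbol.terminal))

/-- The letter-bounded language `a_1^* a_2^* ⋯ a_m^*`. -/
def letterBounded {T : Type} {m : ℕ} (a : Fin m → T) : Language T :=
  { z | ∃ k : Fin m → ℕ, z = (List.ofFn fun i : Fin m => List.replicate (k i) (a i)).flatten }

/-! If `A ⇒* u A v` and `A ⇒* u' A v'`, then also `A ⇒* u u' A v' v`, so the left words `u` of the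
loops at `A` form a language closed under concatenation, and so do the right words `v`. Since `A` is
useful, every loop occurs inside a derivation of a word of `L(G)`, hence its left and right words
are subwords of words in `a_1^* ⋯ a_m^*` and lie in `a_1^* ⋯ a_m^*` themselves. A language closed
under concatenation inside `a_1^* ⋯ a_m^*` uses at most one letter: letters `c` of `u` and `d` of
`u'` occur in the order `c, d, c` in `u u' u`, which forces `c = d`. -/

section LetterBounded

variable {T : Type} {m : ℕ} {a : Fin m → T}

theorem mem_letterBounded_iff_exists_sorted {z : List T} :
    z ∈ letterBounded a ↔ ∃ w : List (Fin m), w.Pairwise (· ≤ ·) ∧ w.map a = z := by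
  have map_blocks (k : Fin m → ℕ) :
      (List.ofFn fun i => List.replicate (k i) i).flatten.map a =
        (List.ofFn fun i => List.replicate (k i) (a i)).flatten := by
    simp [List.map_flatten, List.map_ofFn, Function.comp_def]
  have pairwise_blocks (k : Fin m → ℕ) :
      (List.ofFn fun i => List.replicate (k i) i).flatten.Pairwise (· ≤ ·) := by
    simp +contextual [List.pairwise_flatten, List.pairwise_ofFn, List.pairwise_replicate,
      List.mem_ofFn, le_of_lt]
  constructor
  · rintro ⟨k, rfl⟩
    exact ⟨_, pairwise_blocks k, map_blocks k⟩
  · rintro ⟨w, hw, rfl⟩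
    have hperm : w.Perm (List.ofFn fun i => List.replicate (w.count i) i).flatten := by
      rw [List.perm_iff_count]
      intro i
      simp [List.count_flatten, List.map_ofFn, List.sum_ofFn, List.count_replicate]
    refine ⟨fun i => w.count i, ?_⟩
    rw [← map_blocks, ← hperm.eq_of_pairwise' hw (pairwise_blocks _)]

theorem mem_letterBounded_of_sublist {y z : List T} (hyz : y.Sublist z)
    (hz : z ∈ letterBounded a) : y ∈ letterBounded a := by
  obtain ⟨w, hw, rfl⟩ := mem_letterBounded_iff_exists_sorted.1 hz
  obtain ⟨w', hw', rfl⟩ := List.sublist_map_iff.1 hyz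
  exact mem_letterBounded_iff_exists_sorted.2 ⟨w', hw.sublist hw', rfl⟩

theorem mem_range_of_mem_letterBounded {z : List T} (hz : z ∈ letterBounded a) {c : T}
    (hc : c ∈ z) : c ∈ Set.range a := by
  obtain ⟨w, -, rfl⟩ := mem_letterBounded_iff_exists_sorted.1 hz
  obtain ⟨i, -, rfl⟩ := List.mem_map.1 hc
  exact ⟨i, rfl⟩

theorem eq_of_append_append_mem_letterBounded (ha : Function.Injective a) {u v : List T}
    (h : u ++ v ++ u ∈ letterBounded a) {c d : T} (hc : c ∈ u) (hd : d ∈ v) : c = d := by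
  have hcdc : [c, d, c].Sublist (u ++ v ++ u) :=
    ((List.singleton_sublist.2 hc).append (List.singleton_sublist.2 hd)).append
      (List.singleton_sublist.2 hc)
  obtain ⟨w, hw, hmap⟩ :=
    mem_letterBounded_iff_exists_sorted.1 (mem_letterBounded_of_sublist hcdc h)
  obtain ⟨i, j, k, rfl⟩ : ∃ i j k, w = [i, j, k] :=
    List.length_eq_three.1 (by simpa using congrArg List.length hmap)
  obtain ⟨rfl, rfl, hki⟩ : a i = c ∧ a j = d ∧ a k = c := by simpa using hmap
  obtain ⟨⟨hij, -⟩, hjk⟩ : (i ≤ j ∧ i ≤ k) ∧ j ≤ k := by simpa using hw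
  rw [le_antisymm hij (hjk.trans_eq (ha hki))]

theorem exists_letter_of_mul_self_le (hm : 0 < m) (ha : Function.Injective a) {W : Language T}
    (hmul : W * W ≤ W) (hW : W ≤ letterBounded a) :
    ∃ l, (∀ u ∈ W, ∀ c ∈ u, c = a l) ∧
      ((∃ u ∈ W, u ≠ []) → ∀ l', (∀ u ∈ W, ∀ c ∈ u, c = a l') → l' = l) := by
  by_cases hne : ∃ u ∈ W, u ≠ []
  · obtain ⟨u, hu, hu_ne⟩ := hne
    obtain ⟨c, hc⟩ := List.exists_mem_of_ne_nil u hu_ne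
    obtain ⟨l, rfl⟩ := mem_range_of_mem_letterBounded (hW hu) hc
    refine ⟨l, fun v hv d hd => ?_, fun _ l' hl' => ha (hl' u hu _ hc).symm⟩
    have huvu : u ++ v ++ u ∈ W :=
      hmul (Language.append_mem_mul (hmul (Language.append_mem_mul hu hv)) hu)
    exact (eq_of_append_append_mem_letterBounded ha (hW huvu) hc hd).symm
  · exact ⟨⟨0, hm⟩, fun u hu c hc => absurd ⟨u, hu, List.ne_nil_of_mem hc⟩ hne,
      fun h => absurd h hne⟩

end LetterBounded

/-- `s ⇒* u A v` with `u` and `v` terminal words. For `s = A` this is a loop at the variable `A`,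
for `s = S` it says that `A` is reachable. -/
def DerivesAround {T : Type*} (g : ContextFreeGrammar T) (s : List (Symbol T g.NT)) (A : g.NT)
    (u v : List T) : Prop :=
  g.Derives s (u.map Symbol.terminal ++ [Symbol.nonterminal A] ++ v.map Symbol.terminal)

namespace DerivesAround

variable {T : Type*} {g : ContextFreeGrammar T} {s : List (Symbol T g.NT)} {A : g.NT}
  {u v : List T}

theorem derives_of_derives (h : DerivesAround g s A u v) {w : List (Symbol T g.NT)}
    (hw : g.Derives [Symbol.nonterminal A] w) :
    g.Derives s (u.map Symbol.terminal ++ w ++ v.map Symbol.terminal) :=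
  h.trans ((hw.append_left _).append_right _)

theorem trans (h : DerivesAround g s A u v) {B : g.NT} {u' v' : List T}
    (h' : DerivesAround g [Symbol.nonterminal A] B u' v') :
    DerivesAround g s B (u ++ u') (v' ++ v) := by
  simpa [DerivesAround] using h.derives_of_derives h'

end DerivesAround

/-- The words `u` such that `A ⇒* u A v` for some terminal word `v`. -/
def leftLoopWords {T : Type*} (g : ContextFreeGrammar T) (A : g.NT) : Language T :=
  {u | ∃ v, DerivesAround g [Symbol.nonterminal A] A u v}

/-- The words `v` such that `A ⇒* u A v` for some terminal word `u`. -/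
def rightLoopWords {T : Type*} (g : ContextFreeGrammar T) (A : g.NT) : Language T :=
  {v | ∃ u, DerivesAround g [Symbol.nonterminal A] A u v}

theorem leftLoopWords_mul_self_le {T : Type*} (g : ContextFreeGrammar T) (A : g.NT) :
    leftLoopWords g A * leftLoopWords g A ≤ leftLoopWords g A := by
  rintro _ ⟨u, ⟨v, h⟩, u', ⟨v', h'⟩, rfl⟩
  exact ⟨v' ++ v, h.trans h'⟩

theorem rightLoopWords_mul_self_le {T : Type*} (g : ContextFreeGrammar T) (A : g.NT) :
    rightLoopWords g A * rightLoopWords g A ≤ rightLoopWords g A := by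
  rintro _ ⟨v, ⟨u, h⟩, v', ⟨u', h'⟩, rfl⟩
  exact ⟨u' ++ u, h'.trans h⟩

section Useful

variable {T : Type} {g : ContextFreeGrammar T} {A : g.NT}

theorem exists_mem_language_of_loop (hA : g.IsUseful A) {u v : List T}
    (h : DerivesAround g [Symbol.nonterminal A] A u v) :
    ∃ x w y : List T, x ++ u ++ w ++ v ++ y ∈ g.language := by
  obtain ⟨⟨x, y, hxy⟩, w, hw⟩ := hA
  refine ⟨x, w, y, (ContextFreeGrammar.mem_language_iff _ _).2 ?_⟩
  simpa using (DerivesAround.trans hxy h).derives_of_derives hw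

variable {m : ℕ} {a : Fin m → T}

theorem leftLoopWords_le_letterBounded (hA : g.IsUseful A)
    (hbound : g.language ≤ letterBounded a) : leftLoopWords g A ≤ letterBounded a := by
  rintro u ⟨v, h⟩
  obtain ⟨x, w, y, hz⟩ := exists_mem_language_of_loop hA h
  have hu : u.Sublist (x ++ u ++ w ++ v ++ y) := List.IsInfix.sublist ⟨x, w ++ v ++ y, by simp⟩
  exact mem_letterBounded_of_sublist hu (hbound hz)

theorem rightLoopWords_le_letterBounded (hA : g.IsUseful A)
    (hbound : g.language ≤ letterBounded a) : rightLoopWords g A ≤ letterBounded a := by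
  rintro v ⟨u, h⟩
  obtain ⟨x, w, y, hz⟩ := exists_mem_language_of_loop hA h
  have hv : v.Sublist (x ++ u ++ w ++ v ++ y) := List.IsInfix.sublist ⟨x ++ u ++ w, y, rfl⟩
  exact mem_letterBounded_of_sublist hv (hbound hz)

end Useful

theorem stmt_0_general {T : Type} {m : ℕ} (hm : 0 < m) {a : Fin m → T}
    (ha : Function.Injective a) {g : ContextFreeGrammar T} {A : g.NT} (hA : g.IsUseful A)
    (hbound : g.language ≤ letterBounded a) :
    (∃ l : Fin m,
      (∀ u v, DerivesAround g [Symbol.nonterminal A] A u v → ∀ c ∈ u, c = a l) ∧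
      ((∃ u v, u ≠ [] ∧ DerivesAround g [Symbol.nonterminal A] A u v) → ∀ l' : Fin m,
        (∀ u v, DerivesAround g [Symbol.nonterminal A] A u v → ∀ c ∈ u, c = a l') → l' = l)) ∧
    (∃ r : Fin m,
      (∀ u v, DerivesAround g [Symbol.nonterminal A] A u v → ∀ c ∈ v, c = a r) ∧
      ((∃ u v, v ≠ [] ∧ DerivesAround g [Symbol.nonterminal A] A u v) → ∀ r' : Fin m,
        (∀ u v, DerivesAround g [Symbol.nonterminal A] A u v → ∀ c ∈ v, c = a r') → r' = r)) := by
  obtain ⟨l, hl, hl_unique⟩ := exists_letter_of_mul_self_le hm ha (leftLoopWords_mul_self_le g A)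
    (leftLoopWords_le_letterBounded hA hbound)
  obtain ⟨r, hr, hr_unique⟩ := exists_letter_of_mul_self_le hm ha (rightLoopWords_mul_self_le g A)
    (rightLoopWords_le_letterBounded hA hbound)
  refine ⟨⟨l, fun u v h => hl u ⟨v, h⟩, ?_⟩, ⟨r, fun u v h => hr v ⟨u, h⟩, ?_⟩⟩
  · rintro ⟨u, v, hu_ne, h⟩ l' hl'
    exact hl_unique ⟨u, ⟨v, h⟩, hu_ne⟩ l' fun u ⟨v, h⟩ => hl' u v h
  · rintro ⟨u, v, hv_ne, h⟩ r' hr'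
    exact hr_unique ⟨v, ⟨u, h⟩, hv_ne⟩ r' fun v ⟨u, h⟩ => hr' u v h

theorem stmt_0 {T : Type} {m : ℕ} (hm : 0 < m) (a : Fin m → T) (ha : Function.Injective a)
    (g : ContextFreeGrammar T) (hCNF : g.IsCNF) (huseful : ∀ A : g.NT, g.IsUseful A)
    (hbound : g.language ≤ letterBounded a) (A : g.NT) :
    (∃ l : Fin m,
      (∀ u v : List T,
        g.Derives [Symbol.nonterminal A]
          (u.map Symbol.terminal ++ [Symbol.nonterminal A] ++ v.map Symbol.terminal) →
        ∀ c ∈ u, c = a l) ∧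
      ((∃ u v : List T, u ≠ [] ∧
          g.Derives [Symbol.nonterminal A]
            (u.map Symbol.terminal ++ [Symbol.nonterminal A] ++ v.map Symbol.terminal)) →
        ∀ l' : Fin m,
          (∀ u v : List T,
            g.Derives [Symbol.nonterminal A]
              (u.map Symbol.terminal ++ [Symbol.nonterminal A] ++ v.map Symbol.terminal) →
            ∀ c ∈ u, c = a l') →
          l' = l)) ∧
    (∃ r : Fin m,
      (∀ u v : List T,
        g.Derives [Symbol.nonterminal A]
          (u.map Symbol.terminal ++ [Symbol.nonterminal A] ++ v.map Symbol.terminal) →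
        ∀ c ∈ v, c = a r) ∧
      ((∃ u v : List T, v ≠ [] ∧
          g.Derives [Symbol.nonterminal A]
            (u.map Symbol.terminal ++ [Symbol.nonterminal A] ++ v.map Symbol.terminal)) →
        ∀ r' : Fin m,
          (∀ u v : List T,
            g.Derives [Symbol.nonterminal A]
              (u.map Symbol.terminal ++ [Symbol.nonterminal A] ++ v.map Symbol.terminal) →
            ∀ c ∈ v, c = a r') →
          r' = r)) :=
  stmt_0_general hm ha (huseful A) hbound
end

section
/- Let Σ = {a_1, …, a_m} with pairwise distinct symbols a_i, and let G be a context-free grammar in Chomsky normal form over Σ such that every variable of G is useful and L(G) ⊆ a_1^* a_2^* ⋯ a_m^*. Let A and B be variables of G admitting derivations A ⇒* u A v with u ∈ a_{l_A}^+ and v ∈ a_{r_A}^+, and B ⇒* u' B v' with u' ∈ a_{l_B}^+ and v' ∈ a_{r_B}^+, for indices l_A, r_A, l_B, r_B ∈ {1, …, m}. Then: (i) if A ⇒* α B β for some sentential forms α, β, then l_A ≤ l_B ≤ r_B ≤ r_A; and (ii) if S ⇒* α A β B γ for some sentential forms α, β, γ (i.e., A occurs to the left of B in a sentential form derivable from the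 start symbol), then l_A ≤ r_A ≤ l_B ≤ r_B. -/
/-- `A ⇒* u A v` where `u ∈ a_l^+` and `v ∈ a_r^+`. -/
def hasBorder {T : Type} {m : ℕ} (a : Fin m → T) (g : ContextFreeGrammar T) (A : g.NT)
    (l r : Fin m) : Prop :=
  ∃ u v : List T, u ≠ [] ∧ v ≠ [] ∧ (∀ c ∈ u, c = a l) ∧ (∀ c ∈ v, c = a r) ∧
    g.Derives [Symbol.nonterminal A]
      (u.map Symbol.terminal ++ [Symbol.nonterminal A] ++ v.map Symbol.terminal)

/-!
Rewriting never destroys a terminal, so the terminals of a sentential form `s` are a subword of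
every word derived from `s`. When all variables are productive, any `s` with `S ⇒* s` derives a word
of `a_1^* a_2^* ⋯ a_m^*`, hence the terminals of `s` already appear in the order of the letters.
Substituting `A ⇒* u A v` and `B ⇒* u' B v'` into a sentential form where `B` occurs below `A` gives
the subword `a_{l_A} a_{l_B} a_{r_B} a_{r_A}`; where `B` occurs to the right of `A`, the subword is
`a_{l_A} a_{r_A} a_{l_B} a_{r_B}`.
-/

/-- The word left after erasing the nonterminals of a sentential form; it keeps track of the
terminals already produced in the course of a derivation. -/
def terminals {T N : Type*} (s : List (Symbol T N)) : List T :=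
  s.filterMap fun
    | .terminal t => some t
    | .nonterminal _ => none

/-- Productive variables: those that derive some terminal word. This is the second half of
`ContextFreeGrammar.IsUseful`. -/
def IsProductive {T : Type*} (g : ContextFreeGrammar T) (A : g.NT) : Prop :=
  ∃ w : List T, g.Derives [Symbol.nonterminal A] (w.map Symbol.terminal)

/-- Reachable variables: those that occur in a sentential form derivable from the start symbol.
The first half of `ContextFreeGrammar.IsUseful` asks in addition for terminal context words. -/
def IsReachable {T : Type*} (g : ContextFreeGrammar T) (A : g.NT) : Prop :=
  ∃ α β : List (Symbol T g.NT),
    g.Derives [Symbol.nonterminal g.initial] (α ++ [Symbol.nonterminal A] ++ β)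

section Terminals

variable {T N : Type*}

@[simp]
theorem terminals_append (s t : List (Symbol T N)) :
    terminals (s ++ t) = terminals s ++ terminals t :=
  List.filterMap_append

@[simp]
theorem terminals_map_terminal (w : List T) :
    terminals (w.map (Symbol.terminal : T → Symbol T N)) = w := by
  simp [terminals, List.filterMap_map]

@[simp]
theorem terminals_cons_nonterminal (A : N) (s : List (Symbol T N)) :
    terminals (Symbol.nonterminal A :: s) = terminals s :=
  rfl

end Terminals

section Derivations

variable {T : Type*} {g : ContextFreeGrammar T}

theorem terminals_sublist_of_produces {s t : List (Symbol T g.NT)} (h : g.Produces s t) :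
    (terminals s).Sublist (terminals t) := by
  obtain ⟨r, -, hr⟩ := h
  obtain ⟨p, q, rfl, rfl⟩ := hr.exists_parts
  simp only [List.append_assoc, List.singleton_append, terminals_append, terminals_cons_nonterminal]
  exact (List.sublist_append_right _ _).append_left _

theorem terminals_sublist_of_derives {s t : List (Symbol T g.NT)} (h : g.Derives s t) :
    (terminals s).Sublist (terminals t) := by
  induction h with
  | refl => exact List.Sublist.refl _
  | tail _ hstep ih => exact ih.trans (terminals_sublist_of_produces hstep)

theorem exists_derives_map_terminal (hprod : ∀ N : g.NT, IsProductive g N)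
    (s : List (Symbol T g.NT)) : ∃ w : List T, g.Derives s (w.map Symbol.terminal) := by
  induction s with
  | nil => exact ⟨[], .refl _⟩
  | cons c s ih =>
    obtain ⟨w, hw⟩ := ih
    obtain ⟨v, hv⟩ : ∃ v : List T, g.Derives [c] (v.map Symbol.terminal) := by
      cases c with
      | terminal t => exact ⟨[t], .refl _⟩
      | nonterminal N => exact hprod N
    refine ⟨v ++ w, ?_⟩
    rw [List.map_append]
    exact (hv.append_right s).trans (hw.append_left _)

theorem exists_mem_language_terminals_sublist (hprod : ∀ N : g.NT, IsProductive g N)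
    {s : List (Symbol T g.NT)} (hs : g.Derives [Symbol.nonterminal g.initial] s) :
    ∃ w ∈ g.language, (terminals s).Sublist w := by
  obtain ⟨w, hw⟩ := exists_derives_map_terminal hprod s
  exact ⟨w, hs.trans hw, by simpa using terminals_sublist_of_derives hw⟩

theorem derives_trans_nonterminal {s t α β : List (Symbol T g.NT)} {A : g.NT}
    (hs : g.Derives s (α ++ [Symbol.nonterminal A] ++ β))
    (hA : g.Derives [Symbol.nonterminal A] t) : g.Derives s (α ++ t ++ β) :=
  hs.trans ((hA.append_left α).append_right β)

end Derivations

section LetterBounded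

variable {T : Type} {m : ℕ} {a : Fin m → T}

theorem exists_sortedLE_map_eq_of_mem_letterBounded {z : List T} (hz : z ∈ letterBounded a) :
    ∃ is : List (Fin m), is.SortedLE ∧ is.map a = z := by
  obtain ⟨k, rfl⟩ := hz
  refine ⟨(List.ofFn fun i => List.replicate (k i) i).flatten, ?_, ?_⟩
  · rw [List.sortedLE_iff_pairwise, List.pairwise_flatten, List.pairwise_ofFn]
    constructor
    · simp [List.mem_ofFn, List.pairwise_replicate]
    · intro i j hij x hx y hy
      rw [List.eq_of_mem_replicate hx, List.eq_of_mem_replicate hy]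
      exact hij.le
  · simp [List.map_flatten, List.map_ofFn, Function.comp_def]

theorem sortedLE_of_map_sublist_of_mem_letterBounded (ha : Function.Injective a)
    {z : List T} (hz : z ∈ letterBounded a) {is : List (Fin m)} (his : (is.map a).Sublist z) :
    is.SortedLE := by
  obtain ⟨js, hjs, rfl⟩ := exists_sortedLE_map_eq_of_mem_letterBounded hz
  obtain ⟨ks, hks, hmap⟩ := List.sublist_map_iff.1 his
  obtain rfl := List.map_injective_iff.2 ha hmap
  exact (hjs.pairwise.sublist hks).sortedLE

variable {g : ContextFreeGrammar T}

theorem sortedLE_of_map_sublist_terminals (ha : Function.Injective a)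
    (hprod : ∀ N : g.NT, IsProductive g N) (hbound : g.language ≤ letterBounded a)
    {s : List (Symbol T g.NT)} (hs : g.Derives [Symbol.nonterminal g.initial] s)
    {is : List (Fin m)} (his : (is.map a).Sublist (terminals s)) : is.SortedLE := by
  obtain ⟨w, hw, hsw⟩ := exists_mem_language_terminals_sublist hprod hs
  exact sortedLE_of_map_sublist_of_mem_letterBounded ha (hbound hw) (his.trans hsw)

theorem hasBorder.exists_derives_mem {A : g.NT} {l r : Fin m} (h : hasBorder a g A l r) :
    ∃ u v : List T, a l ∈ u ∧ a r ∈ v ∧ g.Derives [Symbol.nonterminal A]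
      (u.map Symbol.terminal ++ [Symbol.nonterminal A] ++ v.map Symbol.terminal) := by
  obtain ⟨u, v, hu, hv, hul, hvr, hd⟩ := h
  exact ⟨u, v, hul _ (u.head_mem hu) ▸ u.head_mem hu, hvr _ (v.head_mem hv) ▸ v.head_mem hv, hd⟩

variable {A B : g.NT} {lA rA lB rB : Fin m}

theorem hasBorder.sortedLE_of_derives (ha : Function.Injective a)
    (hprod : ∀ N : g.NT, IsProductive g N) (hbound : g.language ≤ letterBounded a)
    (hreach : IsReachable g A) (hA : hasBorder a g A lA rA) (hB : hasBorder a g B lB rB)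
    {α β : List (Symbol T g.NT)}
    (h : g.Derives [Symbol.nonterminal A] (α ++ [Symbol.nonterminal B] ++ β)) :
    [lA, lB, rB, rA].SortedLE := by
  obtain ⟨u, v, hu, hv, hdA⟩ := hA.exists_derives_mem
  obtain ⟨x, y, hx, hy, hdB⟩ := hB.exists_derives_mem
  obtain ⟨p, q, hS⟩ := hreach
  have hderiv := derives_trans_nonterminal hS
    (derives_trans_nonterminal hdA (derives_trans_nonterminal h hdB))
  have hxy : [a lB, a rB].Sublist (terminals α ++ (x ++ y) ++ terminals β) :=
    ((List.singleton_sublist.2 hx).append (List.singleton_sublist.2 hy)).trans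
      (List.infix_append _ _ _).sublist
  have huxyv : [a lA, a lB, a rB, a rA].Sublist
      (u ++ (terminals α ++ (x ++ y) ++ terminals β) ++ v) :=
    ((List.singleton_sublist.2 hu).append hxy).append (List.singleton_sublist.2 hv)
  refine sortedLE_of_map_sublist_terminals ha hprod hbound hderiv ?_
  simpa using huxyv.trans (List.infix_append (terminals p) _ (terminals q)).sublist

theorem hasBorder.sortedLE_of_derives_initial (ha : Function.Injective a)
    (hprod : ∀ N : g.NT, IsProductive g N) (hbound : g.language ≤ letterBounded a)
    (hA : hasBorder a g A lA rA) (hB : hasBorder a g B lB rB) {α β γ : List (Symbol T g.NT)}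
    (h : g.Derives [Symbol.nonterminal g.initial]
      (α ++ [Symbol.nonterminal A] ++ β ++ [Symbol.nonterminal B] ++ γ)) :
    [lA, rA, lB, rB].SortedLE := by
  obtain ⟨u, v, hu, hv, hdA⟩ := hA.exists_derives_mem
  obtain ⟨x, y, hx, hy, hdB⟩ := hB.exists_derives_mem
  have hderiv := (derives_trans_nonterminal h hdB).trans
    ((((hdA.append_left α).append_right β).append_right _).append_right γ)
  have huv : [a lA, a rA].Sublist (u ++ v) :=
    (List.singleton_sublist.2 hu).append (List.singleton_sublist.2 hv)
  have hxy : [a lB, a rB].Sublist (x ++ y) :=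
    (List.singleton_sublist.2 hx).append (List.singleton_sublist.2 hy)
  have huvxy : [a lA, a rA, a lB, a rB].Sublist (u ++ v ++ terminals β ++ (x ++ y)) :=
    (huv.trans (List.sublist_append_left _ _)).append hxy
  refine sortedLE_of_map_sublist_terminals ha hprod hbound hderiv ?_
  simpa using huvxy.trans (List.infix_append (terminals α) _ (terminals γ)).sublist

end LetterBounded

theorem stmt_1_general {T : Type} {m : ℕ} {a : Fin m → T} (ha : Function.Injective a)
    {g : ContextFreeGrammar T} (hprod : ∀ N : g.NT, IsProductive g N)
    (hbound : g.language ≤ letterBounded a)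
    {A B : g.NT} {lA rA lB rB : Fin m} (hreach : IsReachable g A)
    (hA : hasBorder a g A lA rA) (hB : hasBorder a g B lB rB) :
    (∀ α β : List (Symbol T g.NT),
      g.Derives [Symbol.nonterminal A] (α ++ [Symbol.nonterminal B] ++ β) →
      lA ≤ lB ∧ lB ≤ rB ∧ rB ≤ rA) ∧
    (∀ α β γ : List (Symbol T g.NT),
      g.Derives [Symbol.nonterminal g.initial]
        (α ++ [Symbol.nonterminal A] ++ β ++ [Symbol.nonterminal B] ++ γ) →
      lA ≤ rA ∧ rA ≤ lB ∧ lB ≤ rB) := by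
  constructor
  · intro α β h
    simpa [List.sortedLE_iff_isChain] using
      hasBorder.sortedLE_of_derives ha hprod hbound hreach hA hB h
  · intro α β γ h
    simpa [List.sortedLE_iff_isChain] using
      hasBorder.sortedLE_of_derives_initial ha hprod hbound hA hB h

theorem stmt_1 {T : Type} {m : ℕ} (hm : 0 < m) (a : Fin m → T) (ha : Function.Injective a)
    (g : ContextFreeGrammar T) (hCNF : g.IsCNF) (huseful : ∀ A : g.NT, g.IsUseful A)
    (hbound : g.language ≤ letterBounded a)
    (A B : g.NT) (lA rA lB rB : Fin m)
    (hA : hasBorder a g A lA rA) (hB : hasBorder a g B lB rB) :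
    (∀ α β : List (Symbol T g.NT),
      g.Derives [Symbol.nonterminal A] (α ++ [Symbol.nonterminal B] ++ β) →
      lA ≤ lB ∧ lB ≤ rB ∧ rB ≤ rA) ∧
    (∀ α β γ : List (Symbol T g.NT),
      g.Derives [Symbol.nonterminal g.initial]
        (α ++ [Symbol.nonterminal A] ++ β ++ [Symbol.nonterminal B] ++ γ) →
      lA ≤ rA ∧ rA ≤ lB ∧ lB ≤ rB) := by
  obtain ⟨p, q, hS⟩ := (huseful A).1
  exact stmt_1_general ha (fun N => (huseful N).2) hbound ⟨_, _, hS⟩ hA hB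
end

section
/- Let G be a context-free grammar in Chomsky normal form with exactly h variables, and let z ∈ L(G) be a terminal string with |z| > 2^{h-1}. Then there exist a decomposition z = u v w x y with 0 < |v x| < 2^h and a variable A of G such that S ⇒* u A y, A ⇒* v A x, and A ⇒* w; in particular u w y ∈ L(G). -/
/-!
Follow a derivation of `z` downwards, always into the longer of the two halves produced by a rule
`A → B C`. Each step at most halves the length of the remaining word, so a path along which no
variable repeats and which meets `k` variables starts at a word of length at most `2 ^ (k - 1)`.
If `z` is longer than `2 ^ (h - 1)`, some variable must therefore repeat; at the lowest repetition
the upper occurrence yields a word of length at most `2 ^ h`, and the part of that word outside the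
lower occurrence is the pair `v`, `x` to be pumped.
-/

section ContextFree

variable {T : Type*} {g : ContextFreeGrammar T}

theorem derives_append_append {a b : List (Symbol T g.NT)} (hab : g.Derives a b)
    (p q : List (Symbol T g.NT)) : g.Derives (p ++ a ++ q) (p ++ b ++ q) :=
  (hab.append_left p).append_right q

theorem produces_append_cases {a b c : List (Symbol T g.NT)} (h : g.Produces (a ++ b) c) :
    (∃ a', g.Produces a a' ∧ c = a' ++ b) ∨ ∃ b', g.Produces b b' ∧ c = a ++ b' := by
  obtain ⟨r, hr, hrw⟩ := h
  induction a generalizing c with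
  | nil => exact .inr ⟨c, ⟨r, hr, hrw⟩, rfl⟩
  | cons s a ih =>
    cases hrw with
    | head => exact .inl ⟨r.output ++ a, ⟨r, hr, .head a⟩, (List.append_assoc ..).symm⟩
    | cons _ hrw =>
      rcases ih hrw with ⟨a', ha', rfl⟩ | ⟨b', hb', rfl⟩
      · exact .inl ⟨s :: a', ha'.append_left [s], rfl⟩
      · exact .inr ⟨b', hb', rfl⟩

theorem exists_append_of_derives_append {a b c : List (Symbol T g.NT)}
    (h : g.Derives (a ++ b) c) :
    ∃ a' b', c = a' ++ b' ∧ g.Derives a a' ∧ g.Derives b b' := by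
  induction h with
  | refl => exact ⟨a, b, rfl, .refl a, .refl b⟩
  | tail _ hlast ih =>
    obtain ⟨a', b', rfl, ha, hb⟩ := ih
    rcases produces_append_cases hlast with ⟨a'', ha', rfl⟩ | ⟨b'', hb', rfl⟩
    · exact ⟨a'', b', rfl, ha.trans_produces ha', hb⟩
    · exact ⟨a', b'', rfl, ha, hb.trans_produces hb'⟩

theorem exists_rule_of_derives_terminals {A : g.NT} {w : List T}
    (h : g.Derives [.nonterminal A] (w.map .terminal)) :
    ∃ r ∈ g.rules, r.input = A ∧ g.Derives r.output (w.map .terminal) := by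
  rcases h.eq_or_head with heq | ⟨c, ⟨r, hr, hrw⟩, hc⟩
  · cases w <;> simp at heq
  · cases hrw with
    | head => exact ⟨r, hr, rfl, by simpa using hc⟩
    | cons _ hnil => cases hnil

theorem eq_singleton_of_derives_terminal {t : T} {w : List T}
    (h : g.Derives [.terminal t] (w.map .terminal)) : w = [t] := by
  rcases h.eq_or_head with heq | ⟨c, ⟨r, _, hrw⟩, _⟩
  · cases w <;> simp_all
  · simpa using hrw.nonterminal_input_mem

theorem length_le_of_derives (hε : ∀ r ∈ g.rules, r.output ≠ []) {a b : List (Symbol T g.NT)}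
    (h : g.Derives a b) : a.length ≤ b.length := by
  induction h with
  | refl => exact le_rfl
  | tail _ hlast ih =>
    obtain ⟨r, hr, hrw⟩ := hlast
    obtain ⟨p, q, rfl, rfl⟩ := hrw.exists_parts
    have hpos := List.length_pos_iff.2 (hε r hr)
    simp only [List.length_append, List.length_singleton] at ih ⊢
    omega

/-- `DerivesThrough g A z B w`: some parse tree with root `A` and yield `z` has a subtree with
root `B` and yield `w`. Parse trees are encoded by the derivations `A ⇒* u B y` and `B ⇒* w` with
`z = u w y`. -/
def DerivesThrough (g : ContextFreeGrammar T) (A : g.NT) (z : List T) (B : g.NT) (w : List T) :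
    Prop :=
  ∃ u y : List T, z = u ++ w ++ y ∧
    g.Derives [.nonterminal A] (u.map .terminal ++ [.nonterminal B] ++ y.map .terminal) ∧
    g.Derives [.nonterminal B] (w.map .terminal)

/-- `PumpsWithin g n A z`: some parse tree with root `A` and yield `z` has a subtree with yield
of length at most `n` whose root variable occurs again below it with a strictly shorter yield. -/
def PumpsWithin (g : ContextFreeGrammar T) (n : ℕ) (A : g.NT) (z : List T) : Prop :=
  ∃ (B : g.NT) (z' w : List T), DerivesThrough g A z B z' ∧ DerivesThrough g B z' B w ∧
    w.length < z'.length ∧ z'.length ≤ n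

namespace DerivesThrough

variable {A B C : g.NT} {z w w' : List T}

theorem refl (h : g.Derives [.nonterminal A] (z.map .terminal)) : DerivesThrough g A z A z :=
  ⟨[], [], by simp, by simpa using ContextFreeGrammar.Derives.refl _, h⟩

theorem trans (h : DerivesThrough g A z B w) (h' : DerivesThrough g B w C w') :
    DerivesThrough g A z C w' := by
  obtain ⟨u, y, rfl, hAB, -⟩ := h
  obtain ⟨v, x, rfl, hBC, hC⟩ := h'
  refine ⟨u ++ v, x ++ y, by simp, ?_, hC⟩
  simpa using hAB.trans (derives_append_append hBC (u.map .terminal) (y.map .terminal))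

theorem derives_bottom (h : DerivesThrough g A z B w) :
    g.Derives [.nonterminal B] (w.map .terminal) := by
  obtain ⟨-, -, -, -, hB⟩ := h
  exact hB

theorem length_le (h : DerivesThrough g A z B w) : w.length ≤ z.length := by
  obtain ⟨u, y, rfl, -⟩ := h
  simp only [List.length_append]
  omega

end DerivesThrough

theorem PumpsWithin.of_derivesThrough {n : ℕ} {A B : g.NT} {z w : List T}
    (h : DerivesThrough g A z B w) (hB : PumpsWithin g n B w) : PumpsWithin g n A z := by
  obtain ⟨C, z', w', hBC, hC, hlt, hle⟩ := hB
  exact ⟨C, z', w', h.trans hBC, hC, hlt, hle⟩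

end ContextFree

section ChomskyNormalForm

variable {T : Type} {g : ContextFreeGrammar T}

theorem output_ne_nil_of_isCNF (hCNF : g.IsCNF) : ∀ r ∈ g.rules, r.output ≠ [] := by
  intro r hr
  rcases hCNF r hr with ⟨B, C, hout⟩ | ⟨t, hout⟩ <;> simp [hout]

theorem length_pos_of_isCNF_of_derives (hCNF : g.IsCNF) {A : g.NT} {w : List T}
    (h : g.Derives [.nonterminal A] (w.map .terminal)) : 0 < w.length := by
  simpa [Nat.succ_le_iff] using length_le_of_derives (output_ne_nil_of_isCNF hCNF) h

theorem length_eq_one_or_exists_append_of_isCNF (hCNF : g.IsCNF) {A : g.NT} {z : List T}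
    (hz : g.Derives [.nonterminal A] (z.map .terminal)) :
    z.length = 1 ∨ ∃ (B C : g.NT) (z₁ z₂ : List T), z = z₁ ++ z₂ ∧
      DerivesThrough g A z B z₁ ∧ DerivesThrough g A z C z₂ := by
  obtain ⟨r, hr, rfl, hout⟩ := exists_rule_of_derives_terminals hz
  have hrule : g.Derives [.nonterminal r.input] r.output :=
    ContextFreeGrammar.Produces.single ⟨r, hr, .input_output⟩
  rcases hCNF r hr with ⟨B, C, hBC⟩ | ⟨t, ht⟩
  · right
    rw [hBC] at hout hrule
    obtain ⟨b, c, hbc, hB, hC⟩ :=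
      exists_append_of_derives_append (a := [.nonterminal B]) (b := [.nonterminal C]) hout
    obtain ⟨z₁, z₂, rfl, rfl, rfl⟩ := List.map_eq_append_iff.1 hbc
    exact ⟨B, C, z₁, z₂, rfl,
      ⟨[], z₂, by simp, by simpa using hrule.trans (hC.append_left [.nonterminal B]), hB⟩,
      ⟨z₁, [], by simp, by simpa using hrule.trans (hB.append_right [.nonterminal C]), hC⟩⟩
  · left
    rw [ht] at hout
    simp [eq_singleton_of_derives_terminal hout]

theorem length_eq_one_or_exists_large_subyield_of_isCNF (hCNF : g.IsCNF) {A : g.NT} {z : List T}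
    (hz : g.Derives [.nonterminal A] (z.map .terminal)) :
    z.length = 1 ∨ ∃ (B : g.NT) (w : List T), DerivesThrough g A z B w ∧
      w.length < z.length ∧ z.length ≤ 2 * w.length := by
  refine (length_eq_one_or_exists_append_of_isCNF hCNF hz).imp_right ?_
  rintro ⟨B, C, z₁, z₂, rfl, hB, hC⟩
  have hz₁ := length_pos_of_isCNF_of_derives hCNF hB.derives_bottom
  have hz₂ := length_pos_of_isCNF_of_derives hCNF hC.derives_bottom
  simp only [List.length_append]
  rcases le_total z₂.length z₁.length with hle | hle
  · exact ⟨B, z₁, hB, by omega, by omega⟩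
  · exact ⟨C, z₂, hC, by omega, by omega⟩

theorem card_le_of_forall_derivesThrough {N S : Finset g.NT} (hN : ∀ r ∈ g.rules, r.input ∈ N)
    {A : g.NT} {z : List T} (hS : ∀ B ∈ S, ∃ w, DerivesThrough g A z B w) : S.card ≤ N.card := by
  refine Finset.card_le_card fun B hB => ?_
  obtain ⟨w, hw⟩ := hS B hB
  obtain ⟨r, hr, rfl, -⟩ := exists_rule_of_derives_terminals hw.derives_bottom
  exact hN r hr

/-- `S` is the set of variables met on the path that always enters the longer half. -/
theorem pumpsWithin_or_exists_finset_of_isCNF (hCNF : g.IsCNF) {N : Finset g.NT}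
    (hN : ∀ r ∈ g.rules, r.input ∈ N) {A : g.NT} {z : List T}
    (hz : g.Derives [.nonterminal A] (z.map .terminal)) :
    PumpsWithin g (2 ^ N.card) A z ∨
      ∃ S : Finset g.NT, (∀ B ∈ S, ∃ w, DerivesThrough g A z B w) ∧
        2 * z.length ≤ 2 ^ S.card := by
  classical
  induction hn : z.length using Nat.strong_induction_on generalizing A z with
  | _ n ih =>
  subst hn
  rcases length_eq_one_or_exists_large_subyield_of_isCNF hCNF hz with
    hone | ⟨B, w, hAB, hlt, hle⟩
  · exact .inr ⟨{A}, by simpa using ⟨z, .refl hz⟩, by simp [hone]⟩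
  rcases ih w.length hlt hAB.derives_bottom rfl with hpump | ⟨S, hS, hcard⟩
  · exact .inl (hpump.of_derivesThrough hAB)
  by_cases hA : A ∈ S
  · obtain ⟨w', hBA⟩ := hS A hA
    have hSN : 2 ^ S.card ≤ 2 ^ N.card :=
      Nat.pow_le_pow_right two_pos (card_le_of_forall_derivesThrough hN hS)
    exact .inl ⟨A, z, w', .refl hz, hAB.trans hBA, hBA.length_le.trans_lt hlt,
      hle.trans (hcard.trans hSN)⟩
  · refine .inr ⟨insert A S, (Finset.forall_mem_insert ..).2 ⟨⟨z, .refl hz⟩, ?_⟩, ?_⟩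
    · exact fun C hC => (hS C hC).imp fun _ => hAB.trans
    · rw [Finset.card_insert_of_notMem hA, pow_succ]
      omega

theorem pumpsWithin_of_isCNF (hCNF : g.IsCNF) {N : Finset g.NT}
    (hN : ∀ r ∈ g.rules, r.input ∈ N) {A : g.NT} {z : List T}
    (hz : g.Derives [.nonterminal A] (z.map .terminal)) (hlen : 2 ^ (N.card - 1) < z.length) :
    PumpsWithin g (2 ^ N.card) A z := by
  refine (pumpsWithin_or_exists_finset_of_isCNF hCNF hN hz).resolve_right ?_
  rintro ⟨S, hS, hcard⟩
  have hSN := card_le_of_forall_derivesThrough hN hS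
  have hpow : 2 ^ S.card ≤ 2 ^ (N.card - 1 + 1) := Nat.pow_le_pow_right two_pos (by omega)
  rw [pow_succ] at hpow
  omega

end ChomskyNormalForm

theorem stmt_2_general {T : Type} {g : ContextFreeGrammar T} (hCNF : g.IsCNF)
    {N : Finset g.NT} (hN : ∀ r ∈ g.rules, r.input ∈ N) {S : g.NT} {z : List T}
    (hz : g.Derives [.nonterminal S] (z.map .terminal)) (hlen : 2 ^ (N.card - 1) < z.length) :
    ∃ (u v w x y : List T) (A : g.NT),
      z = u ++ v ++ w ++ x ++ y ∧
      0 < (v ++ x).length ∧ (v ++ x).length < 2 ^ N.card ∧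
      g.Derives [.nonterminal S] (u.map .terminal ++ [.nonterminal A] ++ y.map .terminal) ∧
      g.Derives [.nonterminal A] (v.map .terminal ++ [.nonterminal A] ++ x.map .terminal) ∧
      g.Derives [.nonterminal A] (w.map .terminal) ∧
      g.Derives [.nonterminal S] ((u ++ w ++ y).map .terminal) := by
  obtain ⟨A, z', w, ⟨u, y, rfl, hSA, -⟩, ⟨v, x, rfl, hAA, hA⟩, hlt, hle⟩ :=
    pumpsWithin_of_isCNF hCNF hN hz hlen
  have hw : 0 < w.length := length_pos_of_isCNF_of_derives hCNF hA
  have hSw := hSA.trans (derives_append_append hA (u.map .terminal) (y.map .terminal))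
  simp only [List.length_append] at hlt hle
  refine ⟨u, v, w, x, y, A, by simp, ?_, ?_, hSA, hAA, hA, by simpa using hSw⟩ <;>
    · rw [List.length_append]
      omega

theorem stmt_2 {T : Type} (g : ContextFreeGrammar T) [Fintype g.NT] (hCNF : g.IsCNF)
    (z : List T) (hz : z ∈ g.language)
    (hlen : 2 ^ (Fintype.card g.NT - 1) < z.length) :
    ∃ (u v w x y : List T) (A : g.NT),
      z = u ++ v ++ w ++ x ++ y ∧
      0 < (v ++ x).length ∧ (v ++ x).length < 2 ^ (Fintype.card g.NT) ∧
      g.Derives [Symbol.nonterminal g.initial]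
        (u.map Symbol.terminal ++ [Symbol.nonterminal A] ++ y.map Symbol.terminal) ∧
      g.Derives [Symbol.nonterminal A]
        (v.map Symbol.terminal ++ [Symbol.nonterminal A] ++ x.map Symbol.terminal) ∧
      g.Derives [Symbol.nonterminal A] (w.map Symbol.terminal) ∧
      (u ++ w ++ y) ∈ g.language :=
  stmt_2_general hCNF (fun r _ => Finset.mem_univ r.input) hz hlen
end

section
/- Let Σ = {a_1, …, a_m} with pairwise distinct symbols a_i, and let G be a context-free grammar in Chomsky normal form over Σ with exactly h variables, every variable useful, and L(G) ⊆ a_1^* ⋯ a_m^*. Then for every z ∈ L(G) with |z| > 2^{h-1} there exist an integer k > 0 and strings z_0, z_1, …, z_k ∈ L(G) with z_k = z and 0 < |z_0| ≤ 2^{h-1}, such that for each i ∈ {1, …, k} there are a variable A_i of G, terminal strings u, w, y, v_i, x_i with z_{i-1} = u w y, z_i = u v_i w x_i y, 0 < |v_i x_i| < 2^h, S ⇒* u A_i y, A_i ⇒* v_i A_i x_i, and A_i ⇒* w; moreover there exist indices l_i ≤ r_i in {1, …, m} with v_i ∈ a_{l_i}^*, x_i ∈ a_{r_i}^*, such that l_i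 = r_i whenever v_i = ε or x_i = ε, and (l_1, r_1) ≤ (l_2, r_2) ≤ ⋯ ≤ (l_k, r_k) in the border order. -/
/-- The border order on pairs of indices:
`(l, r) ≤ (l', r')` iff `l < l'`, or `l = l'` and `r ≥ r'`. -/
def borderLE {m : ℕ} (p q : Fin m × Fin m) : Prop :=
  p.1 < q.1 ∨ (p.1 = q.1 ∧ q.2 ≤ p.2)

/-!
Removing repetition-free loops `B ⇒* v B x` one at a time from a derivation tree of `z` leaves a
repetition-free tree, whose yield has at most `2 ^ (h - 1)` letters. As `G` is letter-bounded, every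
loop has a border `(l, r)`, and a word of `L(G)` is determined by its letters; so the loops may be
pumped in again in any order, as long as the variable of each loop is present when its turn comes.

The loops are inserted one by one into a list sorted by border. Let `b` have to move in front of
`c`, whose border is larger. Either the variable of `b` is present before `c` is pumped, and the two
can be exchanged, or it is created by `c`, and `b` is merged into `c`. A loop in a side tree of `c`
has a border above that of `c`, so `b` lies on the path of `c`, and merging happens within one
strongly connected component `K` of variables, all of which admit loops with `l ≠ r`. Each of them
is used at most once, so at most `|K|` loops are merged. Side trees of loops in `K` avoid `K`, so
repetition-free loops in `K` have at most `|K| * 2 ^ (h - |K| - 1)` letters, and merged loops stay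
below `2 ^ h` letters because `|K| ^ 2 < 2 ^ (|K| + 1)`.
-/

section ParseTree

variable {T : Type*} {g : ContextFreeGrammar T} {A B C D : g.NT}

/-- Derivation trees with root labelled by the index. Only rules in Chomsky normal form are used;
the rules of any other shape are ignored. -/
inductive ParseTree (g : ContextFreeGrammar T) : g.NT → Type _
  | leaf {A : g.NT} {t : T} (h : ⟨A, [.terminal t]⟩ ∈ g.rules) : ParseTree g A
  | node {A B C : g.NT} (h : ⟨A, [.nonterminal B, .nonterminal C]⟩ ∈ g.rules)
      (l : ParseTree g B) (r : ParseTree g C) : ParseTree g A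

/-- Derivation trees with root `A` in which one leaf, the hole, is an unexpanded variable `B`.
These are the derivations `A ⇒* v B x`. -/
inductive ParseContext (g : ContextFreeGrammar T) : g.NT → g.NT → Type _
  | hole (A : g.NT) : ParseContext g A A
  | inLeft {A B C D : g.NT} (h : ⟨A, [.nonterminal B, .nonterminal C]⟩ ∈ g.rules)
      (c : ParseContext g B D) (r : ParseTree g C) : ParseContext g A D
  | inRight {A B C D : g.NT} (h : ⟨A, [.nonterminal B, .nonterminal C]⟩ ∈ g.rules)
      (l : ParseTree g B) (c : ParseContext g C D) : ParseContext g A D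

namespace ParseTree

/-- The terminal word at the leaves of a tree. -/
def yield {A : g.NT} : ParseTree g A → List T
  | leaf (t := t) _ => [t]
  | node _ l r => l.yield ++ r.yield

/-- The variables labelling the nodes of a tree. -/
def vars {A : g.NT} : ParseTree g A → Set g.NT
  | leaf _ => {A}
  | node _ l r => insert A (l.vars ∪ r.vars)

/-- No variable occurs twice on a path from the root to a leaf. -/
def RepetitionFree {A : g.NT} : ParseTree g A → Prop
  | leaf _ => True
  | node _ l r => A ∉ l.vars ∧ A ∉ r.vars ∧ l.RepetitionFree ∧ r.RepetitionFree

end ParseTree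

namespace ParseContext

/-- The terminal word to the left of the hole. -/
def left {A B : g.NT} : ParseContext g A B → List T
  | hole _ => []
  | inLeft _ c _ => c.left
  | inRight _ l c => l.yield ++ c.left

/-- The terminal word to the right of the hole. -/
def right {A B : g.NT} : ParseContext g A B → List T
  | hole _ => []
  | inLeft _ c r => c.right ++ r.yield
  | inRight _ _ c => c.right

/-- The terminal symbols, with multiplicity, at the leaves of a context. -/
def letters (c : ParseContext g A B) : Multiset T := (c.left : Multiset T) + c.right

/-- The variables on the path from the root to the hole, the hole itself excluded. -/
def pathVars {A B : g.NT} : ParseContext g A B → Set g.NT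
  | hole _ => ∅
  | inLeft _ c _ => insert A c.pathVars
  | inRight _ _ c => insert A c.pathVars

/-- The variables of the subtrees hanging off the path from the root to the hole. -/
def sideVars {A B : g.NT} : ParseContext g A B → Set g.NT
  | hole _ => ∅
  | inLeft _ c r => c.sideVars ∪ r.vars
  | inRight _ l c => l.vars ∪ c.sideVars

/-- All variables of a context, the hole excluded. -/
def vars (c : ParseContext g A B) : Set g.NT := c.pathVars ∪ c.sideVars

/-- No variable occurs twice on the path from the root to the hole, the hole excluded, nor on a
path from the root to a leaf of a side tree. -/
def RepetitionFree {A B : g.NT} : ParseContext g A B → Prop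
  | hole _ => True
  | inLeft _ c r => A ∉ c.pathVars ∧ c.RepetitionFree ∧ r.RepetitionFree
  | inRight _ l c => A ∉ c.pathVars ∧ l.RepetitionFree ∧ c.RepetitionFree

/-- Plugging a context into the hole of another one. -/
def comp {A B C : g.NT} : ParseContext g A B → ParseContext g B C → ParseContext g A C
  | hole _, d => d
  | inLeft h c r, d => inLeft h (c.comp d) r
  | inRight h l c, d => inRight h l (c.comp d)

/-- Plugging a tree into the hole of a context. -/
def fill {A B : g.NT} : ParseContext g A B → ParseTree g B → ParseTree g A
  | hole _, s => s
  | inLeft h c r, s => .node h (c.fill s) r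
  | inRight h l c, s => .node h l (c.fill s)

end ParseContext

namespace ParseTree

lemma root_mem_vars (t : ParseTree g A) : A ∈ t.vars := by
  cases t <;> simp [vars]

lemma yield_ne_nil (t : ParseTree g A) : t.yield ≠ [] := by
  induction t with
  | leaf => simp [yield]
  | node _ _ _ ihl => simp [yield, ihl]

lemma exists_eq_fill (t : ParseTree g A) (hD : D ∈ t.vars) :
    ∃ (c : ParseContext g A D) (s : ParseTree g D), t = c.fill s := by
  induction t with
  | leaf h =>
    obtain rfl : D = _ := hD
    exact ⟨.hole _, .leaf h, rfl⟩
  | node h l r ihl ihr =>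
    rcases hD with rfl | hD | hD
    · exact ⟨.hole _, .node h l r, rfl⟩
    · obtain ⟨c, s, rfl⟩ := ihl hD
      exact ⟨.inLeft h c r, s, rfl⟩
    · obtain ⟨c, s, rfl⟩ := ihr hD
      exact ⟨.inRight h l c, s, rfl⟩

lemma RepetitionFree.two_mul_length_yield_le [Finite g.NT] {t : ParseTree g A}
    (ht : t.RepetitionFree) : 2 * t.yield.length ≤ 2 ^ t.vars.ncard := by
  induction t with
  | leaf => simp [yield, vars]
  | @node A B C h l r ihl ihr =>
    obtain ⟨hAl, hAr, hl, hr⟩ := ht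
    have hA : A ∉ l.vars ∪ r.vars := by simp [hAl, hAr]
    calc 2 * (l.yield ++ r.yield).length = 2 * l.yield.length + 2 * r.yield.length := by
          simp only [List.length_append]; ring
      _ ≤ 2 ^ (l.vars ∪ r.vars).ncard + 2 ^ (l.vars ∪ r.vars).ncard := by
          gcongr
          · exact (ihl hl).trans (Nat.pow_le_pow_right two_pos
              (Set.ncard_le_ncard Set.subset_union_left))
          · exact (ihr hr).trans (Nat.pow_le_pow_right two_pos
              (Set.ncard_le_ncard Set.subset_union_right))
      _ = 2 ^ (insert A (l.vars ∪ r.vars)).ncard := by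
          rw [Set.ncard_insert_of_notMem hA, pow_succ]; ring

lemma RepetitionFree.two_mul_length_yield_le_two_pow_card [Finite g.NT] {t : ParseTree g A}
    (ht : t.RepetitionFree) : 2 * t.yield.length ≤ 2 ^ Nat.card g.NT :=
  ht.two_mul_length_yield_le.trans
    (Nat.pow_le_pow_right two_pos (Set.ncard_le_card _))

end ParseTree

namespace ParseContext

section comp

variable (c : ParseContext g A B) (d : ParseContext g B C) (s : ParseTree g B)

@[simp] lemma left_comp : (c.comp d).left = c.left ++ d.left := by
  induction c <;> simp_all [comp, left]

@[simp] lemma right_comp : (c.comp d).right = d.right ++ c.right := by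
  induction c <;> simp_all [comp, right]

@[simp] lemma pathVars_comp : (c.comp d).pathVars = c.pathVars ∪ d.pathVars := by
  induction c <;> simp_all [comp, pathVars, Set.insert_union]

@[simp] lemma sideVars_comp : (c.comp d).sideVars = c.sideVars ∪ d.sideVars := by
  induction c <;> simp_all only [comp, sideVars, Set.empty_union] <;> ac_rfl

@[simp] lemma vars_comp : (c.comp d).vars = c.vars ∪ d.vars := by
  simp only [vars, pathVars_comp, sideVars_comp, Set.union_union_union_comm]

@[simp] lemma letters_comp : (c.comp d).letters = c.letters + d.letters := by
  simp only [letters, left_comp, right_comp, ← Multiset.coe_add]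
  abel

@[simp] lemma yield_fill : (c.fill s).yield = c.left ++ s.yield ++ c.right := by
  induction c <;> simp_all [fill, left, right, ParseTree.yield]

lemma coe_yield_fill : ((c.fill s).yield : Multiset T) = c.letters + s.yield := by
  simp only [yield_fill, letters, ← Multiset.coe_add]
  abel

lemma card_letters_lt_length_yield_fill : c.letters.card < (c.fill s).yield.length := by
  have hs := List.length_pos_iff.2 s.yield_ne_nil
  rw [← Multiset.coe_card, coe_yield_fill, Multiset.card_add, Multiset.coe_card]
  lia

@[simp] lemma vars_fill : (c.fill s).vars = c.vars ∪ s.vars := by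
  induction c with
  | hole => simp [fill, vars, pathVars, sideVars]
  | inLeft | inRight =>
    simp_all only [fill, vars, pathVars, sideVars, ParseTree.vars, Set.insert_union]
    ac_rfl

end comp

@[simp] lemma letters_inLeft (h : ⟨A, [.nonterminal B, .nonterminal C]⟩ ∈ g.rules)
    (c : ParseContext g B D) (r : ParseTree g C) :
    (inLeft h c r).letters = r.yield + c.letters := by
  simp only [letters, left, right, ← Multiset.coe_add]
  abel

@[simp] lemma letters_inRight (h : ⟨A, [.nonterminal B, .nonterminal C]⟩ ∈ g.rules)
    (l : ParseTree g B) (c : ParseContext g C D) :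
    (inRight h l c).letters = l.yield + c.letters := by
  simp only [letters, left, right, ← Multiset.coe_add]
  abel

lemma letters_eq_zero {c : ParseContext g A B} : c.letters = 0 ↔ c.left = [] ∧ c.right = [] := by
  simp [letters]

lemma exists_eq_comp (c : ParseContext g A B) (hD : D ∈ c.pathVars) :
    ∃ (c₁ : ParseContext g A D) (c₂ : ParseContext g D B), c = c₁.comp c₂ := by
  induction c with
  | hole => exact hD.elim
  | inLeft h c r ih =>
    rcases hD with rfl | hD
    · exact ⟨.hole _, .inLeft h c r, rfl⟩
    · obtain ⟨c₁, c₂, rfl⟩ := ih hD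
      exact ⟨.inLeft h c₁ r, c₂, rfl⟩
  | inRight h l c ih =>
    rcases hD with rfl | hD
    · exact ⟨.hole _, .inRight h l c, rfl⟩
    · obtain ⟨c₁, c₂, rfl⟩ := ih hD
      exact ⟨.inRight h l c₁, c₂, rfl⟩

lemma RepetitionFree.of_fill {c : ParseContext g A B} {s : ParseTree g B}
    (h : (c.fill s).RepetitionFree) : c.RepetitionFree ∧ B ∉ c.pathVars := by
  induction c with
  | hole => simp [RepetitionFree, pathVars]
  | @inLeft A B C D _ c r ih =>
    obtain ⟨hA, -, hc, hr⟩ := h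
    obtain ⟨hc', hD⟩ := ih hc
    simp only [vars_fill, vars, Set.mem_union, not_or] at hA
    refine ⟨⟨hA.1.1, hc', hr⟩, ?_⟩
    rintro (rfl | hD')
    exacts [hA.2 s.root_mem_vars, hD hD']
  | @inRight A B C D _ l c ih =>
    obtain ⟨-, hA, hl, hc⟩ := h
    obtain ⟨hc', hD⟩ := ih hc
    simp only [vars_fill, vars, Set.mem_union, not_or] at hA
    refine ⟨⟨hA.1.1, hl, hc'⟩, ?_⟩
    rintro (rfl | hD')
    exacts [hA.2 s.root_mem_vars, hD hD']

lemma two_mul_card_yield_add_letters_le [Finite g.NT] {t : ParseTree g A} {c : ParseContext g B C}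
    (ht : t.RepetitionFree) (hD : D ∉ c.pathVars)
    (hc : 2 * c.letters.card ≤ c.pathVars.ncard * 2 ^ c.sideVars.ncard) :
    2 * (t.yield + c.letters).card ≤
      (insert D c.pathVars).ncard * 2 ^ (t.vars ∪ c.sideVars).ncard := by
  have ht' : 2 * t.yield.length ≤ 2 ^ (t.vars ∪ c.sideVars).ncard :=
    ht.two_mul_length_yield_le.trans
      (Nat.pow_le_pow_right two_pos (Set.ncard_le_ncard Set.subset_union_left))
  have hc' : 2 * c.letters.card ≤ c.pathVars.ncard * 2 ^ (t.vars ∪ c.sideVars).ncard :=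
    hc.trans (Nat.mul_le_mul_left _
      (Nat.pow_le_pow_right two_pos (Set.ncard_le_ncard Set.subset_union_right)))
  rw [Set.ncard_insert_of_notMem hD, Multiset.card_add, Multiset.coe_card]
  linarith

lemma RepetitionFree.two_mul_card_letters_le [Finite g.NT] {c : ParseContext g A B}
    (hc : c.RepetitionFree) :
    2 * c.letters.card ≤ c.pathVars.ncard * 2 ^ c.sideVars.ncard := by
  induction c with
  | hole => simp [letters, left, right]
  | inLeft _ c r ih =>
    rw [letters_inLeft, sideVars, Set.union_comm]
    exact two_mul_card_yield_add_letters_le hc.2.2 hc.1 (ih hc.2.1)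
  | inRight _ l c ih =>
    rw [letters_inRight]
    exact two_mul_card_yield_add_letters_le hc.2.1 hc.1 (ih hc.2.2)

end ParseContext

lemma ParseTree.exists_repetitionFree_loop [Finite g.NT] (t : ParseTree g A)
    (ht : ¬ t.RepetitionFree) :
    ∃ (B : g.NT) (c : ParseContext g A B) (p : ParseContext g B B) (s : ParseTree g B),
      t = c.fill (p.fill s) ∧ p.letters ≠ 0 ∧ p.RepetitionFree ∧
        p.letters.card < 2 ^ Nat.card g.NT := by
  induction t with
  | leaf => exact (ht trivial).elim
  | @node A B C h l r ihl ihr =>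
    by_cases hl : l.RepetitionFree
    swap
    · obtain ⟨B, c, p, s, rfl, hp⟩ := ihl hl
      exact ⟨B, .inLeft h c r, p, s, rfl, hp⟩
    by_cases hr : r.RepetitionFree
    swap
    · obtain ⟨B, c, p, s, rfl, hp⟩ := ihr hr
      exact ⟨B, .inRight h l c, p, s, rfl, hp⟩
    have hlen : (node h l r).yield.length ≤ 2 ^ Nat.card g.NT := by
      have := hl.two_mul_length_yield_le_two_pow_card
      have := hr.two_mul_length_yield_le_two_pow_card
      rw [yield, List.length_append]
      lia
    have hA : A ∈ l.vars ∨ A ∈ r.vars := by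
      by_contra! hA
      exact ht ⟨hA.1, hA.2, hl, hr⟩
    rcases hA with hA | hA
    · obtain ⟨p, s, rfl⟩ := l.exists_eq_fill hA
      obtain ⟨hp, hAp⟩ := ParseContext.RepetitionFree.of_fill hl
      exact ⟨A, .hole A, .inLeft h p r, s, rfl, by simp [r.yield_ne_nil], ⟨hAp, hp, hr⟩,
        (ParseContext.card_letters_lt_length_yield_fill (.inLeft h p r) s).trans_le hlen⟩
    · obtain ⟨p, s, rfl⟩ := r.exists_eq_fill hA
      obtain ⟨hp, hAp⟩ := ParseContext.RepetitionFree.of_fill hr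
      exact ⟨A, .hole A, .inRight h l p, s, rfl, by simp [l.yield_ne_nil], ⟨hAp, hl, hp⟩,
        (ParseContext.card_letters_lt_length_yield_fill (.inRight h l p) s).trans_le hlen⟩

end ParseTree

section Derivation

variable {T : Type*} {g : ContextFreeGrammar T} {A B : g.NT}

lemma derives_of_mem_rules {γ : List (Symbol T g.NT)} (h : ⟨A, γ⟩ ∈ g.rules) :
    g.Derives [.nonterminal A] γ :=
  ContextFreeGrammar.Produces.single ⟨_, h, ContextFreeRule.Rewrites.input_output⟩

lemma derives_append_append_s3 {α α' β β' : List (Symbol T g.NT)} (hα : g.Derives α α')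
    (hβ : g.Derives β β') : g.Derives (α ++ β) (α' ++ β') :=
  (hα.append_right β).trans (hβ.append_left α')

lemma ParseTree.derives (t : ParseTree g A) :
    g.Derives [.nonterminal A] (t.yield.map .terminal) := by
  induction t with
  | leaf h => exact derives_of_mem_rules h
  | node h l r ihl ihr =>
    rw [yield, List.map_append]
    exact (derives_of_mem_rules h).trans (derives_append_append_s3 ihl ihr)

lemma ParseTree.yield_mem_language (t : ParseTree g g.initial) : t.yield ∈ g.language :=
  t.derives

lemma ParseContext.derives (c : ParseContext g A B) :
    g.Derives [.nonterminal A]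
      (c.left.map .terminal ++ [.nonterminal B] ++ c.right.map .terminal) := by
  induction c with
  | hole => exact Relation.ReflTransGen.refl
  | inLeft h c r ih =>
    simpa only [left, right, List.map_append, List.append_assoc] using
      (derives_of_mem_rules h).trans (derives_append_append_s3 ih r.derives)
  | inRight h l c ih =>
    simpa only [left, right, List.map_append, List.append_assoc] using
      (derives_of_mem_rules h).trans (derives_append_append_s3 l.derives ih)

end Derivation

section TreeLanguage

variable {T : Type} {g : ContextFreeGrammar T}

/-- The words that parse trees assign to a symbol: a terminal stands for itself, a variable for the
yields of the trees rooted there. -/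
def treeLanguage : Symbol T g.NT → Language T
  | .terminal t => {[t]}
  | .nonterminal A => Set.range (ParseTree.yield (A := A))

lemma prod_treeLanguage_map_terminal (w : List T) :
    ((w.map .terminal).map (treeLanguage (g := g))).prod = {w} := by
  induction w with
  | nil => rfl
  | cons t w ih =>
    rw [List.map_cons, List.map_cons, List.prod_cons, ih]
    exact Set.image2_singleton

lemma prod_treeLanguage_output_le (hg : g.IsCNF) {r : ContextFreeRule T g.NT}
    (hr : r ∈ g.rules) :
    (r.output.map treeLanguage).prod ≤ treeLanguage (.nonterminal r.input) := by
  obtain ⟨A, γ⟩ := r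
  obtain ⟨B, C, rfl⟩ | ⟨t, rfl⟩ := hg _ hr
  · simp only [List.map_cons, List.map_nil, List.prod_cons, List.prod_nil, mul_one]
    rintro _ ⟨_, ⟨l, rfl⟩, _, ⟨r, rfl⟩, rfl⟩
    exact ⟨.node hr l r, rfl⟩
  · simp only [List.map_cons, List.map_nil, List.prod_cons, List.prod_nil, mul_one]
    rintro _ rfl
    exact ⟨.leaf hr, rfl⟩

lemma prod_treeLanguage_le_of_derives (hg : g.IsCNF) {α β : List (Symbol T g.NT)}
    (h : g.Derives α β) : (β.map treeLanguage).prod ≤ (α.map treeLanguage).prod := by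
  induction h with
  | refl => exact le_rfl
  | tail _ hβ ih =>
    obtain ⟨r, hr, hβ⟩ := hβ
    obtain ⟨p, q, rfl, rfl⟩ := hβ.exists_parts
    refine le_trans ?_ ih
    simp only [List.map_append, List.prod_append, List.map_singleton, List.prod_singleton]
    gcongr
    exact prod_treeLanguage_output_le hg hr

lemma exists_parseTree_yield_eq (hg : g.IsCNF) {A : g.NT} {w : List T}
    (h : g.Derives [.nonterminal A] (w.map .terminal)) : ∃ t : ParseTree g A, t.yield = w := by
  have hw := prod_treeLanguage_le_of_derives hg h
  rw [prod_treeLanguage_map_terminal, List.map_singleton, List.prod_singleton] at hw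
  exact hw rfl

end TreeLanguage

section SortedWord

variable {T ι : Type*} [PartialOrder ι] {a : ι → T} {i j : ι} {v x v' x' z z' : List T}
  {β β' γ : ι × ι}

/-- The word `z` is the image under `a` of a weakly increasing word of indices. -/
def IsSortedWord (a : ι → T) (z : List T) : Prop :=
  ∃ w : List ι, w.Pairwise (· ≤ ·) ∧ z = w.map a

lemma isSortedWord_of_mem_letterBounded {T : Type} {m : ℕ} {a : Fin m → T} {z : List T}
    (hz : z ∈ letterBounded a) : IsSortedWord a z := by
  obtain ⟨k, rfl⟩ := hz
  refine ⟨(List.ofFn fun i ↦ List.replicate (k i) i).flatten, ?_, ?_⟩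
  · refine List.pairwise_flatten.2 ⟨?_, List.pairwise_ofFn.2 fun i j hij x hx y hy ↦ ?_⟩
    · simp [List.mem_ofFn, List.pairwise_replicate]
    · rw [List.eq_of_mem_replicate hx, List.eq_of_mem_replicate hy]
      exact hij.le
  · simp only [List.map_flatten, List.map_ofFn, Function.comp_def, List.map_replicate]

namespace IsSortedWord

lemma sublist (hz : IsSortedWord a z) (h : z'.Sublist z) : IsSortedWord a z' := by
  obtain ⟨w, hw, rfl⟩ := hz
  obtain ⟨w', hw', rfl⟩ := List.sublist_map_iff.1 h
  exact ⟨w', hw.sublist hw', rfl⟩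

lemma eq_of_perm (ha : a.Injective) (hz : IsSortedWord a z) (hz' : IsSortedWord a z')
    (h : z.Perm z') : z = z' := by
  obtain ⟨w, hw, rfl⟩ := hz
  obtain ⟨w', hw', rfl⟩ := hz'
  rw [((List.map_perm_map_iff ha).1 h).eq_of_pairwise (fun _ _ _ _ ↦ le_antisymm) hw hw']

lemma le_of_mem_append (ha : a.Injective) (h : IsSortedWord a (v ++ x)) (hi : a i ∈ v)
    (hj : a j ∈ x) : i ≤ j := by
  obtain ⟨w, hw, hvx⟩ := h
  obtain ⟨wv, wx, rfl, rfl, rfl⟩ := List.append_eq_map_iff.1 hvx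
  rw [List.mem_map_of_injective ha] at hi hj
  exact (List.pairwise_append.1 hw).2.2 i hi j hj

lemma exists_forall_eq (ha : a.Injective) (h : IsSortedWord a (v ++ v)) (hv : v ≠ []) :
    ∃ i, a i ∈ v ∧ ∀ c ∈ v, c = a i := by
  have exists_index : ∀ c ∈ v, ∃ i, c = a i := by
    obtain ⟨w, -, hw⟩ := h.sublist (List.sublist_append_left v v)
    rw [hw]
    simp only [List.mem_map]
    rintro _ ⟨i, -, rfl⟩
    exact ⟨i, rfl⟩
  obtain ⟨_, hc⟩ := List.exists_mem_of_ne_nil v hv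
  obtain ⟨i, rfl⟩ := exists_index _ hc
  refine ⟨i, hc, fun d hd ↦ ?_⟩
  obtain ⟨j, rfl⟩ := exists_index d hd
  rw [(h.le_of_mem_append ha hc hd).antisymm (h.le_of_mem_append ha hd hc)]

end IsSortedWord

/-- The pair `β = (l, r)` records that `v` is a power of `a l` and `x` a power of `a r`; when one
of the two words is empty, the free index is normalised to `l = r`. -/
structure IsBorder (a : ι → T) (v x : List T) (β : ι × ι) : Prop where
  fst_le_snd : β.1 ≤ β.2
  eq_fst : ∀ c ∈ v, c = a β.1
  eq_snd : ∀ c ∈ x, c = a β.2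
  fst_eq_snd : v = [] ∨ x = [] → β.1 = β.2

lemma IsSortedWord.exists_isBorder (ha : a.Injective) (h : IsSortedWord a (v ++ v ++ (x ++ x)))
    (hvx : v ≠ [] ∨ x ≠ []) : ∃ β, IsBorder a v x β := by
  have sorted_vv : IsSortedWord a (v ++ v) := h.sublist (List.sublist_append_left _ _)
  have sorted_xx : IsSortedWord a (x ++ x) := h.sublist (List.sublist_append_right _ _)
  by_cases hv : v = []
  · obtain ⟨r, -, hr⟩ := sorted_xx.exists_forall_eq ha (hvx.resolve_left (not_not.2 hv))
    exact ⟨(r, r), le_rfl, by simp [hv], hr, fun _ ↦ rfl⟩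
  obtain ⟨l, hlv, hl⟩ := sorted_vv.exists_forall_eq ha hv
  by_cases hx : x = []
  · exact ⟨(l, l), le_rfl, hl, by simp [hx], fun _ ↦ rfl⟩
  obtain ⟨r, hrx, hr⟩ := sorted_xx.exists_forall_eq ha hx
  have hlr : l ≤ r :=
    h.le_of_mem_append ha (List.mem_append_left _ hlv) (List.mem_append_left _ hrx)
  exact ⟨(l, r), hlr, hl, hr, by simp [hv, hx]⟩

namespace IsBorder

lemma ne_nil_of_fst_ne_snd (h : IsBorder a v x β) (hβ : β.1 ≠ β.2) : v ≠ [] ∧ x ≠ [] :=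
  ⟨fun hv ↦ hβ (h.fst_eq_snd (.inl hv)), fun hx ↦ hβ (h.fst_eq_snd (.inr hx))⟩

lemma fst_eq_of_subset_left (ha : a.Injective) (h : IsBorder a v x β) (h' : IsBorder a v' x' β')
    (hv : v' ⊆ v) (hv' : v' ≠ []) : β'.1 = β.1 := by
  obtain ⟨c, hc⟩ := List.exists_mem_of_ne_nil v' hv'
  exact ha ((h'.eq_fst c hc).symm.trans (h.eq_fst c (hv hc)))

lemma snd_eq_of_subset_right (ha : a.Injective) (h : IsBorder a v x β) (h' : IsBorder a v' x' β')
    (hx : x' ⊆ x) (hx' : x' ≠ []) : β'.2 = β.2 := by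
  obtain ⟨c, hc⟩ := List.exists_mem_of_ne_nil x' hx'
  exact ha ((h'.eq_snd c hc).symm.trans (h.eq_snd c (hx hc)))

lemma snd_eq_of_subset_left (ha : a.Injective) (h : IsBorder a v x β) (h' : IsBorder a v' x' β')
    (hx : x' ⊆ v) (hx' : x' ≠ []) : β'.2 = β.1 := by
  obtain ⟨c, hc⟩ := List.exists_mem_of_ne_nil x' hx'
  exact ha ((h'.eq_snd c hc).symm.trans (h.eq_fst c (hx hc)))

lemma fst_eq_of_subset_right (ha : a.Injective) (h : IsBorder a v x β) (h' : IsBorder a v' x' β')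
    (hv : v' ⊆ x) (hv' : v' ≠ []) : β'.1 = β.2 := by
  obtain ⟨c, hc⟩ := List.exists_mem_of_ne_nil v' hv'
  exact ha ((h'.eq_fst c hc).symm.trans (h.eq_snd c (hv hc)))

lemma eq_of_subset (ha : a.Injective) (h : IsBorder a v x β) (h' : IsBorder a v' x' β')
    (hv : v' ⊆ v) (hx : x' ⊆ x) (hvx : v' ≠ [] ∨ x' ≠ []) :
    β' = β ∨ (x' = [] ∧ β' = (β.1, β.1)) ∨ (v' = [] ∧ β' = (β.2, β.2)) := by
  by_cases hv' : v' = []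
  · have := h.snd_eq_of_subset_right ha h' hx (hvx.resolve_left (not_not.2 hv'))
    exact .inr (.inr ⟨hv', Prod.ext ((h'.fst_eq_snd (.inl hv')).trans this) this⟩)
  have hfst := h.fst_eq_of_subset_left ha h' hv hv'
  by_cases hx' : x' = []
  · exact .inr (.inl ⟨hx', Prod.ext hfst ((h'.fst_eq_snd (.inr hx')).symm.trans hfst)⟩)
  · exact .inl (Prod.ext hfst (h.snd_eq_of_subset_right ha h' hx hx'))

lemma eq_of_subset_left (ha : a.Injective) (h : IsBorder a v x β) (h' : IsBorder a v' x' β')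
    (hv : v' ⊆ v) (hx : x' ⊆ v) (hvx : v' ≠ [] ∨ x' ≠ []) : β' = (β.1, β.1) := by
  have h₁ := h.fst_eq_of_subset_left ha h' hv
  have h₂ := h.snd_eq_of_subset_left ha h' hx
  have h₃ := h'.fst_eq_snd
  ext <;> grind

lemma eq_of_subset_right (ha : a.Injective) (h : IsBorder a v x β) (h' : IsBorder a v' x' β')
    (hv : v' ⊆ x) (hx : x' ⊆ x) (hvx : v' ≠ [] ∨ x' ≠ []) : β' = (β.2, β.2) := by
  have h₁ := h.fst_eq_of_subset_right ha h' hv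
  have h₂ := h.snd_eq_of_subset_right ha h' hx
  have h₃ := h'.fst_eq_snd
  ext <;> grind

end IsBorder

end SortedWord

section BorderOrder

variable {T : Type*} {m : ℕ} {a : Fin m → T} {v x v' x' v'' x'' : List T} {β γ μ : Fin m × Fin m}

lemma borderLE.refl (β : Fin m × Fin m) : borderLE β β := .inr ⟨rfl, le_rfl⟩

lemma borderLE.trans (h : borderLE β γ) (h' : borderLE γ μ) : borderLE β μ := by
  unfold borderLE at *
  lia

lemma borderLE_of_not_borderLE (h : ¬ borderLE β γ) : borderLE γ β := by
  unfold borderLE at *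
  lia

lemma IsBorder.borderLE_of_subset (ha : a.Injective) (h : IsBorder a v x μ)
    (h' : IsBorder a v' x' β) (hv : v' ⊆ v) (hx : x' ⊆ x) (hvx : v' ≠ [] ∨ x' ≠ []) :
    borderLE μ β := by
  have := h.fst_le_snd
  rcases h.eq_of_subset ha h' hv hx hvx with rfl | ⟨-, rfl⟩ | ⟨-, rfl⟩ <;> unfold borderLE <;> lia

lemma IsBorder.fst_ne_snd_of_not_borderLE (ha : a.Injective) (h : IsBorder a v x μ)
    (hγ : IsBorder a v' x' γ) (hv' : v' ⊆ v) (hx' : x' ⊆ x) (hvx' : v' ≠ [] ∨ x' ≠ [])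
    (hβ : IsBorder a v'' x'' β) (hv'' : v'' ⊆ v) (hx'' : x'' ⊆ x) (hvx'' : v'' ≠ [] ∨ x'' ≠ [])
    (hγβ : ¬ borderLE γ β) : μ.1 ≠ μ.2 ∧ (v' = [] ∨ x' = []) := by
  have hμβ := h.borderLE_of_subset ha hβ hv'' hx'' hvx''
  rcases h.eq_of_subset ha hγ hv' hx' hvx' with rfl | ⟨rfl, rfl⟩ | ⟨rfl, rfl⟩
  · exact (hγβ hμβ).elim
  · refine ⟨fun hμ ↦ hγβ ?_, .inr rfl⟩
    rwa [show (μ.1, μ.1) = μ from Prod.ext rfl hμ]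
  · refine ⟨fun hμ ↦ hγβ ?_, .inl rfl⟩
    rwa [show (μ.2, μ.2) = μ from Prod.ext hμ.symm rfl]

end BorderOrder

section Loops

lemma derives_replace {T : Type*} {g : ContextFreeGrammar T} {A : g.NT}
    {α β γ δ : List (Symbol T g.NT)} (h : g.Derives α (β ++ [.nonterminal A] ++ δ))
    (hγ : g.Derives [.nonterminal A] γ) : g.Derives α (β ++ γ ++ δ) :=
  h.trans ((hγ.append_left β).append_right δ)

lemma isSortedWord_loop {T : Type} {ι : Type*} [PartialOrder ι] {a : ι → T}
    {g : ContextFreeGrammar T} {A : g.NT} (hA : g.IsUseful A)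
    (hg : ∀ z ∈ g.language, IsSortedWord a z) (p : ParseContext g A A) :
    IsSortedWord a (p.left ++ p.left ++ (p.right ++ p.right)) := by
  obtain ⟨⟨u, y, huy⟩, w, hw⟩ := hA
  let z := u ++ (p.left ++ p.left ++ w ++ (p.right ++ p.right)) ++ y
  have hz : z ∈ g.language := by
    have := derives_replace huy (derives_replace (p.comp p).derives hw)
    simpa only [z, ContextFreeGrammar.mem_language_iff, ParseContext.left_comp,
      ParseContext.right_comp, List.map_append, List.append_assoc] using this
  refine (hg z hz).sublist (List.Sublist.trans ?_ (List.sublist_append_left _ y))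
  refine List.Sublist.trans ?_ (List.sublist_append_right u _)
  exact (List.sublist_append_left _ w).append_right _

variable {T : Type*} {m : ℕ} {a : Fin m → T} {g : ContextFreeGrammar T} {A B D : g.NT}
  {β γ : Fin m × Fin m}

/-- Every derivation `A ⇒* v A x` with `v` and `x` not both empty has a border. -/
def LoopsHaveBorders (g : ContextFreeGrammar T) (a : Fin m → T) : Prop :=
  ∀ ⦃A : g.NT⦄ (p : ParseContext g A A), p.letters ≠ 0 → ∃ β, IsBorder a p.left p.right β

lemma ParseContext.letters_ne_zero {p : ParseContext g A B} :
    p.letters ≠ 0 ↔ p.left ≠ [] ∨ p.right ≠ [] := by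
  rw [Ne, letters_eq_zero]
  tauto

lemma loopsHaveBorders {T : Type} {a : Fin m → T} {g : ContextFreeGrammar T} (ha : a.Injective)
    (huseful : ∀ A : g.NT, g.IsUseful A) (hbound : g.language ≤ letterBounded a) :
    LoopsHaveBorders g a := fun A p hp ↦
  (isSortedWord_loop (huseful A) (fun _ hz ↦ isSortedWord_of_mem_letterBounded (hbound hz))
    p).exists_isBorder ha (ParseContext.letters_ne_zero.1 hp)

lemma ParseTree.exists_insert (t : ParseTree g A) (hD : D ∈ t.vars) (q : ParseContext g D D) :
    ∃ t' : ParseTree g A, t.yield ++ q.left ++ q.right ⊆ t'.yield := by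
  obtain ⟨c, s, rfl⟩ := t.exists_eq_fill hD
  refine ⟨c.fill (q.fill s), ?_⟩
  simp only [ParseContext.yield_fill]
  grind

lemma ParseContext.exists_insert_side (c : ParseContext g A B) (hD : D ∈ c.sideVars)
    (q : ParseContext g D D) :
    ∃ c' : ParseContext g A B,
      (c.left ≠ [] ∧ c.left ++ q.left ++ q.right ⊆ c'.left) ∨
        (c.right ≠ [] ∧ c.right ++ q.left ++ q.right ⊆ c'.right) := by
  induction c with
  | hole => exact hD.elim
  | inLeft h c r ih =>
    simp only [left, right]
    rcases hD with hD | hD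
    · obtain ⟨c', hleft | ⟨hne, hsub⟩⟩ := ih hD
      · exact ⟨.inLeft h c' r, .inl hleft⟩
      · refine ⟨.inLeft h c' r, .inr ⟨by simp [hne], ?_⟩⟩
        rw [right]
        grind
    · obtain ⟨r', hr'⟩ := r.exists_insert hD q
      refine ⟨.inLeft h c r', .inr ⟨by simp [r.yield_ne_nil], ?_⟩⟩
      rw [right]
      grind
  | inRight h l c ih =>
    simp only [left, right]
    rcases hD with hD | hD
    · obtain ⟨l', hl'⟩ := l.exists_insert hD q
      refine ⟨.inRight h l' c, .inl ⟨by simp [l.yield_ne_nil], ?_⟩⟩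
      rw [left]
      grind
    · obtain ⟨c', ⟨hne, hsub⟩ | hright⟩ := ih hD
      · refine ⟨.inRight h l c', .inl ⟨by simp [hne], ?_⟩⟩
        rw [left]
        grind
      · exact ⟨.inRight h l c', .inr hright⟩

lemma LoopsHaveBorders.borderLE_of_mem_sideVars (hg : LoopsHaveBorders g a) (ha : a.Injective)
    {p : ParseContext g A A} (hγ : IsBorder a p.left p.right γ) (hD : D ∈ p.sideVars)
    {q : ParseContext g D D} (hq : q.letters ≠ 0) (hβ : IsBorder a q.left q.right β) :
    β.1 = β.2 ∧ borderLE γ β := by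
  rw [ParseContext.letters_ne_zero] at hq
  have hγ_le := hγ.fst_le_snd
  obtain ⟨p', ⟨hp, hsub⟩ | ⟨hp, hsub⟩⟩ := p.exists_insert_side hD q <;>
    simp only [List.append_subset] at hsub <;> obtain ⟨⟨hsub_p, hsub_l⟩, hsub_r⟩ := hsub
  · have hp' : p'.left ≠ [] := fun h ↦ hp (List.subset_nil.1 (h ▸ hsub_p))
    obtain ⟨μ, hμ⟩ := hg p' (ParseContext.letters_ne_zero.2 (.inl hp'))
    obtain rfl := hμ.eq_of_subset_left ha hβ hsub_l hsub_r hq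
    have hγμ := hμ.fst_eq_of_subset_left ha hγ hsub_p hp
    exact ⟨rfl, .inr ⟨hγμ, hγμ ▸ hγ_le⟩⟩
  · have hp' : p'.right ≠ [] := fun h ↦ hp (List.subset_nil.1 (h ▸ hsub_p))
    obtain ⟨μ, hμ⟩ := hg p' (ParseContext.letters_ne_zero.2 (.inr hp'))
    obtain rfl := hμ.eq_of_subset_right ha hβ hsub_l hsub_r hq
    have hγμ := hμ.snd_eq_of_subset_right ha hγ hsub_p hp
    exact ⟨rfl, (hγμ ▸ hγ_le).lt_or_eq.imp id fun h ↦ ⟨h, hγμ.ge⟩⟩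

end Loops

section Components

variable {T : Type*} {m : ℕ} {a : Fin m → T} {g : ContextFreeGrammar T} {A B : g.NT}

/-- The strongly connected component of a variable in the graph in which `A` points to `B` when
`A ⇒* v B x` for some terminal words `v`, `x`. -/
def component (A : g.NT) : Set g.NT :=
  {B | Nonempty (ParseContext g A B) ∧ Nonempty (ParseContext g B A)}

lemma self_mem_component (A : g.NT) : A ∈ component A := ⟨⟨.hole A⟩, ⟨.hole A⟩⟩

lemma component_eq_of_mem (h : B ∈ component A) : component B = component A := by
  obtain ⟨⟨c⟩, ⟨d⟩⟩ := h
  ext D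
  exact ⟨fun ⟨⟨p⟩, ⟨q⟩⟩ ↦ ⟨⟨c.comp p⟩, ⟨q.comp d⟩⟩, fun ⟨⟨p⟩, ⟨q⟩⟩ ↦ ⟨⟨d.comp p⟩, ⟨q.comp c⟩⟩⟩

lemma pathVars_subset_component (p : ParseContext g A A) : p.pathVars ⊆ component A := by
  intro D hD
  obtain ⟨c, d, -⟩ := p.exists_eq_comp hD
  exact ⟨⟨c⟩, ⟨d⟩⟩

/-- Some derivation `A ⇒* v A x` has a border with two different indices. -/
def TwoSided (a : Fin m → T) (A : g.NT) : Prop :=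
  ∃ (p : ParseContext g A A) (β : Fin m × Fin m), IsBorder a p.left p.right β ∧ β.1 ≠ β.2

/-- Twice a bound for the number of letters of a repetition-free loop in the component of `A`, when
`A` is two-sided: the side trees on the at most `(component A).ncard` nodes of the path avoid the
component. -/
noncomputable def loopBound (A : g.NT) : ℕ := (component A).ncard * 2 ^ (component A)ᶜ.ncard

lemma loopBound_eq_of_mem (h : B ∈ component A) : loopBound B = loopBound A := by
  simp only [loopBound, component_eq_of_mem h]

namespace TwoSided

lemma of_mem_component (hA : TwoSided a A) (hg : LoopsHaveBorders g a) (ha : a.Injective)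
    (hB : B ∈ component A) : TwoSided a B := by
  obtain ⟨p, β, hβ, hne⟩ := hA
  obtain ⟨⟨c⟩, ⟨d⟩⟩ := hB
  have hp : p.left ≠ [] ∨ p.right ≠ [] := .inl (hβ.ne_nil_of_fst_ne_snd hne).1
  obtain ⟨μ, hμ⟩ := hg ((d.comp p).comp c) (by simp [ParseContext.letters_ne_zero.2 hp])
  refine ⟨_, μ, hμ, ?_⟩
  rcases hμ.eq_of_subset ha hβ (by simp) (by simp) hp with rfl | ⟨-, rfl⟩ | ⟨-, rfl⟩
  exacts [hne, (hne rfl).elim, (hne rfl).elim]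

lemma sideVars_subset_compl_component (hA : TwoSided a A) (hg : LoopsHaveBorders g a)
    (ha : a.Injective) {p : ParseContext g A A} (hp : p.letters ≠ 0) :
    p.sideVars ⊆ (component A)ᶜ := by
  intro D hD hDA
  obtain ⟨q, β, hβ, hne⟩ := hA.of_mem_component hg ha hDA
  have hq : q.letters ≠ 0 := ParseContext.letters_ne_zero.2 (.inl (hβ.ne_nil_of_fst_ne_snd hne).1)
  obtain ⟨γ, hγ⟩ := hg p hp
  exact hne (hg.borderLE_of_mem_sideVars ha hγ hD hq hβ).1

lemma two_mul_card_letters_le_loopBound [Finite g.NT] (hA : TwoSided a A)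
    (hg : LoopsHaveBorders g a) (ha : a.Injective) {p : ParseContext g A A} (hp : p.letters ≠ 0)
    (hrep : p.RepetitionFree) : 2 * p.letters.card ≤ loopBound A :=
  hrep.two_mul_card_letters_le.trans (Nat.mul_le_mul
    (Set.ncard_le_ncard (pathVars_subset_component p))
    (Nat.pow_le_pow_right two_pos
      (Set.ncard_le_ncard (hA.sideVars_subset_compl_component hg ha hp))))

end TwoSided

lemma mul_self_lt_two_pow_succ (n : ℕ) : n * n < 2 ^ (n + 1) := by
  induction n with
  | zero => simp
  | succ n ih =>
    have : n < 2 ^ n := Nat.lt_two_pow_self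
    rw [pow_succ] at ih ⊢
    grind

lemma ncard_component_mul_loopBound_lt [Finite g.NT] (A : g.NT) :
    (component A).ncard * loopBound A < 2 * 2 ^ Nat.card g.NT :=
  calc (component A).ncard * loopBound A
      = (component A).ncard * (component A).ncard * 2 ^ (component A)ᶜ.ncard :=
        (mul_assoc _ _ _).symm
    _ < 2 ^ ((component A).ncard + 1) * 2 ^ (component A)ᶜ.ncard :=
        Nat.mul_lt_mul_of_pos_right (mul_self_lt_two_pow_succ _) (Nat.two_pow_pos _)
    _ = 2 * 2 ^ Nat.card g.NT := by
        rw [← Set.ncard_add_ncard_compl (component A)]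
        ring

end Components

section Pumping

/-- A nonempty loop `A ⇒* v A x` together with a border. -/
structure Pump {T : Type*} {m : ℕ} (g : ContextFreeGrammar T) (a : Fin m → T) where
  /-- The variable `A`. -/
  var : g.NT
  /-- The derivation `A ⇒* v A x`. -/
  context : ParseContext g var var
  letters_ne_zero : context.letters ≠ 0
  /-- The indices of the letters of `v` and of `x`. -/
  border : Fin m × Fin m
  isBorder : IsBorder a context.left context.right border

variable {T : Type*} {m : ℕ} {a : Fin m → T} {g : ContextFreeGrammar T} {A B : g.NT}
  {b c : Pump g a} {es es' es'' : List (Pump g a)} {V W : Set g.NT} {γ : Fin m × Fin m}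

/-- The size condition maintained when pumps are merged: fewer than `2 ^ h` letters, and a one-sided
loop at a two-sided variable respects the bound for repetition-free loops. -/
def Pump.Small (b : Pump g a) : Prop :=
  b.context.letters.card < 2 ^ Nat.card g.NT ∧
    (TwoSided a b.var → b.context.left = [] ∨ b.context.right = [] →
      2 * b.context.letters.card ≤ loopBound b.var)

/-- The letters inserted by a list of pumps. -/
def insertedLetters (es : List (Pump g a)) : Multiset T :=
  (es.map fun e ↦ e.context.letters).sum

/-- The variables of a tree with variables `W` after performing a list of pumps, which is read from
right to left: the head is performed last. -/
def available (W : Set g.NT) : List (Pump g a) → Set g.NT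
  | [] => W
  | e :: es => e.context.vars ∪ available W es

/-- The list of small pumps, read from right to left, can be performed starting from a tree with
variables `W`, and its borders increase. -/
def IsSchedule (W : Set g.NT) : List (Pump g a) → Prop
  | [] => True
  | e :: es =>
      e.var ∈ available W es ∧ e.Small ∧ (∀ f ∈ es, borderLE f.border e.border) ∧ IsSchedule W es

/-- The list `es'` can replace `es` in a schedule: it has the same effect on the variables and
letters, and its borders are bounded by those of `es`. -/
structure Replaces (W : Set g.NT) (es' es : List (Pump g a)) : Prop where
  available_eq : available W es' = available W es
  insertedLetters_eq : insertedLetters es' = insertedLetters es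
  borderLE_of_forall : ∀ γ, (∀ e ∈ es, borderLE e.border γ) → ∀ e ∈ es', borderLE e.border γ

lemma IsSchedule.pairwise (h : IsSchedule W es) :
    es.Pairwise fun e f ↦ borderLE f.border e.border := by
  induction es with
  | nil => exact .nil
  | cons e es ih => exact .cons h.2.2.1 (ih h.2.2.2)

lemma IsSchedule.borderLE_get_rev (h : IsSchedule W es) {i j : Fin es.length} (hij : i ≤ j) :
    borderLE (es.get i.rev).border (es.get j.rev).border := by
  obtain rfl | hlt := hij.eq_or_lt
  · exact .refl _
  · exact List.pairwise_iff_get.1 h.pairwise _ _ (Fin.rev_lt_rev.2 hlt)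

namespace Replaces

lemma refl (W : Set g.NT) (es : List (Pump g a)) : Replaces W es es := ⟨rfl, rfl, fun _ h ↦ h⟩

lemma trans (h : Replaces W es'' es') (h' : Replaces W es' es) : Replaces W es'' es where
  available_eq := h.available_eq.trans h'.available_eq
  insertedLetters_eq := h.insertedLetters_eq.trans h'.insertedLetters_eq
  borderLE_of_forall γ hγ := h.borderLE_of_forall γ (h'.borderLE_of_forall γ hγ)

lemma cons (c : Pump g a) (h : Replaces W es' es) : Replaces W (c :: es') (c :: es) where
  available_eq := by simp only [available, h.available_eq]
  insertedLetters_eq := by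
    simpa only [insertedLetters, List.map_cons, List.sum_cons, add_right_inj] using
      h.insertedLetters_eq
  borderLE_of_forall γ hγ := by
    rw [List.forall_mem_cons] at hγ ⊢
    exact ⟨hγ.1, h.borderLE_of_forall γ hγ.2⟩

lemma swap (b c : Pump g a) (es : List (Pump g a)) :
    Replaces W (c :: b :: es) (b :: c :: es) where
  available_eq := Set.union_left_comm _ _ _
  insertedLetters_eq := by
    simp only [insertedLetters, List.map_cons, List.sum_cons, add_left_comm]
  borderLE_of_forall γ hγ := by
    simp only [List.forall_mem_cons] at hγ ⊢
    tauto

end Replaces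

lemma Pump.exists_merge (hg : LoopsHaveBorders g a) (ha : a.Injective)
    (hb : b.var ∈ c.context.vars) (hcb : ¬ borderLE c.border b.border) :
    b.var ∈ component c.var ∧ (c.context.left = [] ∨ c.context.right = []) ∧
      ∃ d : Pump g a, d.var = c.var ∧ d.context.vars = b.context.vars ∪ c.context.vars ∧
        d.context.letters = b.context.letters + c.context.letters ∧
        borderLE d.border b.border ∧ d.border.1 ≠ d.border.2 := by
  obtain ⟨A, p, hp, γ, hγ⟩ := c
  have hb_path : b.var ∈ p.pathVars := hb.resolve_right fun hside ↦
    hcb (hg.borderLE_of_mem_sideVars ha hγ hside b.letters_ne_zero b.isBorder).2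
  have hb_comp := pathVars_subset_component p hb_path
  obtain ⟨p₁, p₂, rfl⟩ := p.exists_eq_comp hb_path
  have hd : ((p₁.comp b.context).comp p₂).letters ≠ 0 := by simp [b.letters_ne_zero]
  obtain ⟨μ, hμ⟩ := hg _ hd
  have hp_ne := ParseContext.letters_ne_zero.1 hp
  have hb_ne := ParseContext.letters_ne_zero.1 b.letters_ne_zero
  obtain ⟨hμ_ne, hp_oneSided⟩ := hμ.fst_ne_snd_of_not_borderLE ha hγ (by simp) (by simp) hp_ne
    b.isBorder (by simp) (by simp) hb_ne hcb
  refine ⟨hb_comp, hp_oneSided, ⟨A, _, hd, μ, hμ⟩, rfl, ?_, ?_,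
    hμ.borderLE_of_subset ha b.isBorder (by simp) (by simp) hb_ne, hμ_ne⟩
  · simp only [ParseContext.vars_comp]
    ac_rfl
  · simp only [ParseContext.letters_comp]
    ac_rfl

lemma Replaces.of_merge {d : Pump g a} (hvars : d.context.vars = b.context.vars ∪ c.context.vars)
    (hletters : d.context.letters = b.context.letters + c.context.letters)
    (hborder : borderLE d.border b.border) : Replaces W (d :: es) (b :: c :: es) where
  available_eq := by simp only [available, hvars, Set.union_assoc]
  insertedLetters_eq := by
    simp only [insertedLetters, List.map_cons, List.sum_cons, hletters, add_assoc]
  borderLE_of_forall γ hγ := by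
    simp only [List.forall_mem_cons] at hγ ⊢
    exact ⟨hborder.trans hγ.1, hγ.2.2⟩

lemma card_lt_of_two_mul_le_mul_loopBound [Finite g.NT] {n : ℕ} (hA : A ∈ V)
    (hn : 2 * n ≤ ((component A \ V).ncard + 1) * loopBound A) : n < 2 ^ Nat.card g.NT := by
  have hssub : component A \ V ⊂ component A :=
    Set.sdiff_ssubset_left_iff.2 ⟨A, self_mem_component A, hA⟩
  have := Nat.mul_le_mul_right (loopBound A) (Set.ncard_lt_ncard hssub)
  have := ncard_component_mul_loopBound_lt A
  lia

lemma two_mul_add_le_mul_loopBound [Finite g.NT] {V' : Set g.NT} {k n : ℕ} (hV : V ⊆ V')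
    (hB : B ∈ component A) (hBV' : B ∈ V') (hBV : B ∉ V) (hk : 2 * k ≤ loopBound A)
    (hn : 2 * n ≤ ((component A \ V').ncard + 1) * loopBound A) :
    2 * (k + n) ≤ ((component A \ V).ncard + 1) * loopBound A := by
  have hssub : component A \ V' ⊂ component A \ V :=
    ⟨Set.sdiff_subset_sdiff_right hV, fun h ↦ (h ⟨hB, hBV⟩).2 hBV'⟩
  have := Nat.mul_le_mul_right (loopBound A) (Set.ncard_lt_ncard hssub)
  lia

-- The pumps merged into one all start at different variables of the component, and those used up so
-- far lie outside `available W es`: hence the factor in the bounds on the number of letters.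
lemma exists_replaces_of_not_borderLE [Finite g.NT] (hg : LoopsHaveBorders g a)
    (ha : a.Injective) (hc : c.var ∈ available W es) (hc_small : c.Small)
    (hb : b.var ∈ available W (c :: es)) (hb_es : b.var ∉ available W es)
    (hcb : ¬ borderLE c.border b.border)
    (hbound : TwoSided a b.var → 2 * b.context.letters.card ≤
      ((component b.var \ available W (c :: es)).ncard + 1) * loopBound b.var) :
    ∃ d : Pump g a, d.var ∈ available W es ∧ d.Small ∧
      2 * d.context.letters.card ≤
        ((component d.var \ available W es).ncard + 1) * loopBound d.var ∧
      Replaces W (d :: es) (b :: c :: es) := by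
  obtain ⟨hcomp, hc_oneSided, d, hdc, hvars, hletters, hborder, hd_ne⟩ :=
    Pump.exists_merge hg ha (hb.resolve_right hb_es) hcb
  have hc_two : TwoSided a c.var := hdc ▸ ⟨_, _, d.isBorder, hd_ne⟩
  have hd_var : d.var ∈ available W es := hdc ▸ hc
  have hd_bound : 2 * d.context.letters.card ≤
      ((component d.var \ available W es).ncard + 1) * loopBound d.var := by
    have hb_bound := hbound (hc_two.of_mem_component hg ha hcomp)
    rw [component_eq_of_mem hcomp, loopBound_eq_of_mem hcomp] at hb_bound
    rw [hletters, hdc, Multiset.card_add, add_comm]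
    exact two_mul_add_le_mul_loopBound Set.subset_union_right hcomp hb hb_es
      (hc_small.2 hc_two hc_oneSided) hb_bound
  have hd_twoWords := d.isBorder.ne_nil_of_fst_ne_snd hd_ne
  have hd_small : d.Small := ⟨card_lt_of_two_mul_le_mul_loopBound hd_var hd_bound,
    fun _ h ↦ (h.elim hd_twoWords.1 hd_twoWords.2).elim⟩
  exact ⟨d, hd_var, hd_small, hd_bound, .of_merge hvars hletters hborder⟩

lemma IsSchedule.exists_insert [Finite g.NT] (hg : LoopsHaveBorders g a) (ha : a.Injective)
    (hes : IsSchedule W es) (hb : b.var ∈ available W es) (hb_small : b.Small)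
    (hbound : TwoSided a b.var → 2 * b.context.letters.card ≤
      ((component b.var \ available W es).ncard + 1) * loopBound b.var) :
    ∃ es', IsSchedule W es' ∧ Replaces W es' (b :: es) := by
  induction es generalizing b with
  | nil => exact ⟨[b], ⟨hb, hb_small, by simp, trivial⟩, .refl W _⟩
  | cons c es ih =>
    obtain ⟨hc, hc_small, hc_le, hes'⟩ := hes
    by_cases hcb : borderLE c.border b.border
    · refine ⟨b :: c :: es, ⟨hb, hb_small, ?_, hc, hc_small, hc_le, hes'⟩, .refl W _⟩
      exact List.forall_mem_cons.2 ⟨hcb, fun f hf ↦ (hc_le f hf).trans hcb⟩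
    by_cases hb_es : b.var ∈ available W es
    · obtain ⟨es', hsched, hrepl⟩ := ih hes' hb_es hb_small fun h ↦ (hbound h).trans <| by
        gcongr
        exacts [Set.toFinite _, Set.subset_union_right]
      refine ⟨c :: es', ⟨?_, hc_small, ?_, hsched⟩, (hrepl.cons c).trans (.swap b c es)⟩
      · exact hrepl.available_eq ▸ Set.mem_union_right _ hc
      · exact hrepl.borderLE_of_forall _
          (List.forall_mem_cons.2 ⟨borderLE_of_not_borderLE hcb, hc_le⟩)
    · obtain ⟨d, hd, hd_small, hd_bound, hrepl_d⟩ :=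
        exists_replaces_of_not_borderLE hg ha hc hc_small hb hb_es hcb hbound
      obtain ⟨es', hsched, hrepl⟩ := ih hes' hd hd_small fun _ ↦ hd_bound
      exact ⟨es', hsched, hrepl.trans hrepl_d⟩

end Pumping

section Sequence

variable {T : Type*} {m : ℕ} {a : Fin m → T} {g : ContextFreeGrammar T} {A : g.NT}
  {es : List (Pump g a)}

lemma ParseTree.exists_schedule [Finite g.NT] (hg : LoopsHaveBorders g a) (ha : a.Injective)
    (t : ParseTree g A) :
    ∃ (t₀ : ParseTree g A) (es : List (Pump g a)), IsSchedule t₀.vars es ∧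
      2 * t₀.yield.length ≤ 2 ^ Nat.card g.NT ∧ t.vars ⊆ available t₀.vars es ∧
      (t.yield : Multiset T) = insertedLetters es + t₀.yield := by
  induction hn : t.yield.length using Nat.strong_induction_on generalizing t with
  | _ n ih =>
    by_cases ht : t.RepetitionFree
    · exact ⟨t, [], trivial, ht.two_mul_length_yield_le_two_pow_card, subset_rfl,
        (zero_add _).symm⟩
    obtain ⟨B, c, p, s, rfl, hp, hp_rep, hp_card⟩ := t.exists_repetitionFree_loop ht
    have hp_pos : 0 < p.left.length + p.right.length := by
      simpa only [ParseContext.letters, Multiset.card_add, Multiset.coe_card] using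
        Multiset.card_pos.2 hp
    have hlt : (c.fill s).yield.length < n := by
      simp only [← hn, ParseContext.yield_fill, List.length_append]
      lia
    obtain ⟨t₀, es, hsched, ht₀, hvars, hletters⟩ := ih _ hlt (c.fill s) rfl
    obtain ⟨β, hβ⟩ := hg p hp
    have hbound (h : TwoSided a B) := h.two_mul_card_letters_le_loopBound hg ha hp hp_rep
    let b : Pump g a := ⟨B, p, hp, β, hβ⟩
    have hb : b.var ∈ available t₀.vars es := hvars (by simp [b, s.root_mem_vars])
    obtain ⟨es', hsched', hrepl⟩ := hsched.exists_insert hg ha hb ⟨hp_card, fun h _ ↦ hbound h⟩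
      fun h ↦ (hbound h).trans (Nat.le_mul_of_pos_left _ (Nat.succ_pos _))
    refine ⟨t₀, es', hsched', ht₀, ?_, ?_⟩
    · rw [hrepl.available_eq, available]
      simp only [ParseContext.vars_fill] at hvars ⊢
      grind
    · rw [hrepl.insertedLetters_eq, insertedLetters, List.map_cons, List.sum_cons, add_assoc,
        ← insertedLetters, ← hletters]
      simp only [ParseContext.coe_yield_fill, b]
      ac_rfl

/-- The word `z'` arises from the word `z` of the language by inserting the words `v` and `x` of a
derivation `A ⇒* v A x` with fewer than `2 ^ h` letters and border `β`. -/
def PumpStep (g : ContextFreeGrammar T) (a : Fin m → T) (z z' : List T) (β : Fin m × Fin m) :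
    Prop :=
  ∃ (A : g.NT) (u w y v x : List T),
    z = u ++ w ++ y ∧ z' = u ++ v ++ w ++ x ++ y ∧
    0 < (v ++ x).length ∧ (v ++ x).length < 2 ^ Nat.card g.NT ∧
    g.Derives [.nonterminal g.initial]
      (u.map .terminal ++ [.nonterminal A] ++ y.map .terminal) ∧
    g.Derives [.nonterminal A] (v.map .terminal ++ [.nonterminal A] ++ x.map .terminal) ∧
    g.Derives [.nonterminal A] (w.map .terminal) ∧
    β.1 ≤ β.2 ∧ (∀ c ∈ v, c = a β.1) ∧ (∀ c ∈ x, c = a β.2) ∧ (v = [] ∨ x = [] → β.1 = β.2)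

lemma ParseTree.exists_pumpStep (t : ParseTree g g.initial) {e : Pump g a} (he : e.var ∈ t.vars)
    (he_small : e.Small) :
    ∃ t' : ParseTree g g.initial, t'.vars = e.context.vars ∪ t.vars ∧
      (t'.yield : Multiset T) = e.context.letters + t.yield ∧
      PumpStep g a t.yield t'.yield e.border := by
  obtain ⟨c, s, rfl⟩ := t.exists_eq_fill he
  have hpos := Multiset.card_pos.2 e.letters_ne_zero
  refine ⟨c.fill (e.context.fill s), ?_, ?_, e.var, c.left, s.yield, c.right, e.context.left,
    e.context.right, c.yield_fill s, ?_, by simpa [ParseContext.letters] using hpos,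
    by simpa [ParseContext.letters] using he_small.1, c.derives, e.context.derives, s.derives,
    e.isBorder.fst_le_snd, e.isBorder.eq_fst, e.isBorder.eq_snd, e.isBorder.fst_eq_snd⟩
  · simp only [ParseContext.vars_fill, Set.union_left_comm]
  · simp only [ParseContext.coe_yield_fill, add_left_comm]
  · simp only [ParseContext.yield_fill, List.append_assoc]

lemma IsSchedule.exists_pumpSteps {t : ParseTree g g.initial} (hes : IsSchedule t.vars es) :
    ∃ ts : Fin (es.length + 1) → ParseTree g g.initial,
      ts 0 = t ∧ (ts (Fin.last _)).vars = available t.vars es ∧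
      ((ts (Fin.last _)).yield : Multiset T) = insertedLetters es + t.yield ∧
      ∀ i : Fin es.length,
        PumpStep g a (ts i.castSucc).yield (ts i.succ).yield (es.get i.rev).border := by
  induction es with
  | nil => exact ⟨fun _ ↦ t, rfl, rfl, (zero_add _).symm, fun i ↦ i.elim0⟩
  | cons e es ih =>
    obtain ⟨he, he_small, -, hes⟩ := hes
    obtain ⟨ts, hts_zero, hts_vars, hts_letters, hts_step⟩ := ih hes
    obtain ⟨t', ht'_vars, ht'_letters, ht'_step⟩ :=
      (ts (Fin.last _)).exists_pumpStep (hts_vars ▸ he) he_small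
    refine ⟨Fin.snoc (α := fun _ ↦ ParseTree g g.initial) ts t', ?_, ?_, ?_, fun i ↦ ?_⟩
    · exact (Fin.snoc_castSucc (α := fun _ ↦ ParseTree g g.initial) t' ts 0).trans hts_zero
    · simp only [List.length_cons, Fin.snoc_last, ht'_vars, hts_vars, available]
    · simp only [List.length_cons, Fin.snoc_last, ht'_letters, hts_letters, insertedLetters,
        List.map_cons, List.sum_cons, add_assoc]
    · cases i using Fin.lastCases with
      | last => simpa [Fin.snoc_castSucc] using ht'_step
      | cast i =>
        rw [Fin.rev_castSucc, Fin.succ_castSucc, Fin.snoc_castSucc, Fin.snoc_castSucc]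
        exact hts_step i

end Sequence

theorem stmt_3 {T : Type} {m : ℕ} (hm : 0 < m) (a : Fin m → T) (ha : Function.Injective a)
    (g : ContextFreeGrammar T) [Fintype g.NT] (hCNF : g.IsCNF)
    (huseful : ∀ A : g.NT, g.IsUseful A) (hbound : g.language ≤ letterBounded a)
    (z : List T) (hz : z ∈ g.language)
    (hlen : 2 ^ (Fintype.card g.NT - 1) < z.length) :
    ∃ k : ℕ, 0 < k ∧
    ∃ (zs : Fin (k + 1) → List T) (l r : Fin k → Fin m),
      zs (Fin.last k) = z ∧
      (∀ i : Fin (k + 1), zs i ∈ g.language) ∧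
      0 < (zs 0).length ∧ (zs 0).length ≤ 2 ^ (Fintype.card g.NT - 1) ∧
      (∀ i : Fin k, ∃ (A : g.NT) (u w y v x : List T),
        zs i.castSucc = u ++ w ++ y ∧
        zs i.succ = u ++ v ++ w ++ x ++ y ∧
        0 < (v ++ x).length ∧ (v ++ x).length < 2 ^ (Fintype.card g.NT) ∧
        g.Derives [Symbol.nonterminal g.initial]
          (u.map Symbol.terminal ++ [Symbol.nonterminal A] ++ y.map Symbol.terminal) ∧
        g.Derives [Symbol.nonterminal A]
          (v.map Symbol.terminal ++ [Symbol.nonterminal A] ++ x.map Symbol.terminal) ∧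
        g.Derives [Symbol.nonterminal A] (w.map Symbol.terminal) ∧
        l i ≤ r i ∧
        (∀ c ∈ v, c = a (l i)) ∧ (∀ c ∈ x, c = a (r i)) ∧
        ((v = [] ∨ x = []) → l i = r i)) ∧
      (∀ i j : Fin k, i ≤ j → borderLE (l i, r i) (l j, r j)) := by
  simp only [← Nat.card_eq_fintype_card] at hlen ⊢
  have hloops := loopsHaveBorders ha huseful hbound
  obtain ⟨t, rfl⟩ := exists_parseTree_yield_eq hCNF hz
  obtain ⟨t₀, es, hes, ht₀, -, hletters⟩ := t.exists_schedule hloops ha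
  obtain ⟨ts, hts_zero, -, hts_last, hts_step⟩ := hes.exists_pumpSteps
  have hsorted (s : ParseTree g g.initial) : IsSortedWord a s.yield :=
    isSortedWord_of_mem_letterBounded (hbound s.yield_mem_language)
  have hlast : (ts (Fin.last _)).yield = t.yield :=
    (hsorted _).eq_of_perm ha (hsorted _) (Multiset.coe_eq_coe.1 (hts_last.trans hletters.symm))
  have hshort : (ts 0).yield.length ≤ 2 ^ (Nat.card g.NT - 1) := by
    have : Nonempty g.NT := ⟨g.initial⟩
    rw [← mul_pow_sub_one Nat.card_pos.ne'] at ht₀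
    exact hts_zero ▸ Nat.le_of_mul_le_mul_left ht₀ two_pos
  have hes_pos : 0 < es.length := by
    rw [List.length_pos_iff]
    rintro rfl
    exact hlen.not_ge (hlast ▸ hshort)
  exact ⟨es.length, hes_pos, fun i ↦ (ts i).yield, fun i ↦ (es.get i.rev).border.1,
    fun i ↦ (es.get i.rev).border.2, hlast,
    fun i ↦ (ts i).yield_mem_language, List.length_pos_iff.2 (ts 0).yield_ne_nil, hshort, hts_step,
    fun i j hij ↦ hes.borderLE_get_rev hij⟩
end

section
/- Let m ≥ 2 and let a_1, …, a_m be pairwise distinct symbols. For every integer n ≥ 1, the language L̃_n = { a_1^{2^n + n_1} a_2^{n_1 + n_2} ⋯ a_{m-1}^{n_{m-2} + n_{m-1}} a_m^{n_{m-1}} : n_1 ≥ 1, …, n_{m-1} ≥ 1 } is generated by a context-free grammar in Chomsky normal form with at most n + 4m − 3 variables. -/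
/-- The language `L̃_n = { a_1^{2^n + n_1} a_2^{n_1 + n_2} ⋯ a_{m-1}^{n_{m-2}+n_{m-1}}
a_m^{n_{m-1}} : n_1 ≥ 1, …, n_{m-1} ≥ 1 }`, encoded via a function `f : ℕ → ℕ` with
`f 0 = 2^n`, `f j = n_j ≥ 1` for `1 ≤ j ≤ m-1`, and `f m = 0`; the block of the letter
`a_{i+1}` (for `0 ≤ i ≤ m-1`) has length `f i + f (i+1)`. -/
def LtildeLang {T : Type} (m n : ℕ) (a : Fin m → T) : Language T :=
  { z | ∃ f : ℕ → ℕ, f 0 = 2 ^ n ∧ (∀ j : ℕ, 1 ≤ j → j ≤ m - 1 → 1 ≤ f j) ∧ f m = 0 ∧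
      z = (List.ofFn fun i : Fin m =>
            List.replicate (f i.val + f (i.val + 1)) (a i)).flatten }

/-!
The languages derived from the nonterminals of a grammar form the least solution of the system of
inequalities given by its rules. Hence a grammar can be enlarged one operation at a time without
disturbing the languages it already derives: one new nonterminal adds a single letter or a product
of two available languages, and two new nonterminals, `P → K L | K Q` and `Q → P L`, add
`{K^c L^c : c ≥ 1}`. Now `L̃_n` is the product of `a_1^{2^n}`, which is reached from `a_1` by `n`
squarings, and of the `m - 1` languages `{a_i^c a_{i+1}^c : c ≥ 1}`; each of these costs a letter,
the two nonterminals above and a product, so that `n + 1 + 4 (m - 1)` nonterminals suffice.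
-/

open Symbol

section LeastSolution

variable {T N : Type*}

/-- The language of a sentential form once every nonterminal `A` is read as the language `I A`. -/
def formLanguage (I : N → Language T) : List (Symbol T N) → Language T
  | [] => 1
  | terminal t :: u => {[t]} * formLanguage I u
  | nonterminal A :: u => I A * formLanguage I u

lemma formLanguage_append (I : N → Language T) (u v : List (Symbol T N)) :
    formLanguage I (u ++ v) = formLanguage I u * formLanguage I v := by
  induction u with
  | nil => simp only [List.nil_append, formLanguage, one_mul]
  | cons s u ih => cases s <;> simp only [List.cons_append, formLanguage, ih, mul_assoc]

lemma formLanguage_singleton_nonterminal (I : N → Language T) (A : N) :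
    formLanguage I [nonterminal A] = I A :=
  mul_one _

lemma formLanguage_singleton_terminal (I : N → Language T) (t : T) :
    formLanguage I [terminal t] = {[t]} :=
  mul_one _

lemma formLanguage_pair (I : N → Language T) (A B : N) :
    formLanguage I [nonterminal A, nonterminal B] = I A * I B := by
  simp only [formLanguage, mul_one]

lemma formLanguage_mono {I J : N → Language T} (h : I ≤ J) (u : List (Symbol T N)) :
    formLanguage I u ≤ formLanguage J u := by
  induction u with
  | nil => exact le_rfl
  | cons s u ih =>
    cases s with
    | terminal t => exact mul_le_mul_right ih {[t]}
    | nonterminal A => exact mul_le_mul' (h A) ih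

lemma mem_formLanguage_map_terminal (I : N → Language T) (w : List T) :
    w ∈ formLanguage I (w.map terminal) := by
  induction w with
  | nil => exact Language.nil_mem_one
  | cons t w ih => exact Language.append_mem_mul (Set.mem_singleton [t]) ih

/-- `I` solves the system of inequalities that the rules of `g` impose on the languages of its
nonterminals: the right-hand side of every rule for `A` is contained in `I A`. -/
def SolvesRules (g : ContextFreeGrammar T) (I : g.NT → Language T) : Prop :=
  ∀ r ∈ g.rules, formLanguage I r.output ≤ I r.input

/-- The words that `g` derives from the nonterminal `A`. -/
def derivedLanguage (g : ContextFreeGrammar T) (A : g.NT) : Language T :=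
  {w | g.Derives [nonterminal A] (w.map terminal)}

variable {g : ContextFreeGrammar T} {I : g.NT → Language T}

lemma SolvesRules.formLanguage_le_of_derives (hI : SolvesRules g I) {u v : List (Symbol T g.NT)}
    (huv : g.Derives u v) : formLanguage I v ≤ formLanguage I u := by
  induction huv with
  | refl => exact le_rfl
  | tail _ hstep ih =>
    obtain ⟨r, hr, hrw⟩ := hstep
    obtain ⟨p, q, rfl, rfl⟩ := hrw.exists_parts
    refine le_trans ?_ ih
    simp only [formLanguage_append, formLanguage_singleton_nonterminal]
    gcongr
    exact hI r hr

lemma SolvesRules.derivedLanguage_le (hI : SolvesRules g I) (A : g.NT) :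
    derivedLanguage g A ≤ I A := fun w hw => by
  simpa only [formLanguage_singleton_nonterminal] using
    hI.formLanguage_le_of_derives hw (mem_formLanguage_map_terminal I w)

lemma derives_of_mem_formLanguage {u : List (Symbol T g.NT)} {w : List T}
    (hw : w ∈ formLanguage (derivedLanguage g) u) : g.Derives u (w.map terminal) := by
  induction u generalizing w with
  | nil =>
    obtain rfl := (Language.mem_one w).1 hw
    rfl
  | cons s u ih =>
    cases s with
    | terminal t =>
      obtain ⟨_, rfl, y, hy, rfl⟩ := Language.mem_mul.1 hw
      exact (ih hy).append_left [terminal t]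
    | nonterminal A =>
      obtain ⟨x, hx, y, hy, rfl⟩ := Language.mem_mul.1 hw
      rw [List.map_append]
      exact (ContextFreeGrammar.Derives.append_right hx u).trans ((ih hy).append_left _)

lemma solvesRules_derivedLanguage (g : ContextFreeGrammar T) :
    SolvesRules g (derivedLanguage g) := fun r hr _ hw =>
  ContextFreeGrammar.Produces.trans_derives ⟨r, hr, ContextFreeRule.Rewrites.input_output⟩
    (derives_of_mem_formLanguage hw)

lemma SolvesRules.derivedLanguage_eq (hI : SolvesRules g I)
    (hle : ∀ A, I A ≤ derivedLanguage g A) : derivedLanguage g = I :=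
  funext fun A => le_antisymm (hI.derivedLanguage_le A) (hle A)

end LeastSolution

section Extension

variable {T N N' : Type*}

/-- Renaming of the nonterminals in a sentential form. -/
def renameForm (f : N → N') : List (Symbol T N) → List (Symbol T N')
  | [] => []
  | terminal t :: u => terminal t :: renameForm f u
  | nonterminal A :: u => nonterminal (f A) :: renameForm f u

/-- Renaming of the nonterminals in a rule. -/
def renameRule (f : N → N') (r : ContextFreeRule T N) : ContextFreeRule T N' :=
  ⟨f r.input, renameForm f r.output⟩

lemma formLanguage_renameForm (f : N → N') (I : N' → Language T) (u : List (Symbol T N)) :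
    formLanguage I (renameForm f u) = formLanguage (I ∘ f) u := by
  induction u with
  | nil => rfl
  | cons s u ih => cases s <;> simp only [renameForm, formLanguage, ih, Function.comp_apply]

variable {M : Type} {g : ContextFreeGrammar T} {R : Finset (ContextFreeRule T (g.NT ⊕ M))}

open scoped Classical in
/-- The grammar `g` enlarged by new nonterminals `M` and new rules `R`. -/
noncomputable def extendGrammar (g : ContextFreeGrammar T)
    (R : Finset (ContextFreeRule T (g.NT ⊕ M))) : ContextFreeGrammar T where
  NT := g.NT ⊕ M
  initial := .inl g.initial
  rules := g.rules.image (renameRule .inl) ∪ R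

open scoped Classical in
lemma mem_rules_extendGrammar {r : ContextFreeRule T (g.NT ⊕ M)} :
    r ∈ (extendGrammar g R).rules ↔ (∃ r₀ ∈ g.rules, renameRule .inl r₀ = r) ∨ r ∈ R :=
  Finset.mem_union.trans (or_congr_left Finset.mem_image)

lemma derivedLanguage_le_extendGrammar (R : Finset (ContextFreeRule T (g.NT ⊕ M))) (A : g.NT) :
    derivedLanguage g A ≤ derivedLanguage (extendGrammar g R) (.inl A) := by
  have hsolves : SolvesRules g fun A => derivedLanguage (extendGrammar g R) (.inl A) :=
    fun r hr => by
      have h := solvesRules_derivedLanguage (extendGrammar g R) _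
        (mem_rules_extendGrammar.2 (.inl ⟨r, hr, rfl⟩))
      exact (formLanguage_renameForm Sum.inl _ r.output).ge.trans h
  exact hsolves.derivedLanguage_le A

lemma formLanguage_le_derivedLanguage_extendGrammar {r : ContextFreeRule T (g.NT ⊕ M)}
    (hr : r ∈ R) :
    formLanguage (derivedLanguage (extendGrammar g R)) r.output ≤
      derivedLanguage (extendGrammar g R) r.input :=
  solvesRules_derivedLanguage _ _ (mem_rules_extendGrammar.2 (.inr hr))

lemma derivedLanguage_extendGrammar {J : M → Language T}
    (hJ : ∀ r ∈ R, formLanguage (Sum.elim (derivedLanguage g) J) r.output ≤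
      Sum.elim (derivedLanguage g) J r.input)
    (hle : ∀ B, J B ≤ derivedLanguage (extendGrammar g R) (.inr B)) :
    derivedLanguage (extendGrammar g R) = Sum.elim (derivedLanguage g) J := by
  refine SolvesRules.derivedLanguage_eq (fun r hr => ?_)
    (Sum.rec (derivedLanguage_le_extendGrammar R) hle)
  obtain ⟨r₀, hr₀, rfl⟩ | hr := mem_rules_extendGrammar.1 hr
  · exact (formLanguage_renameForm _ _ _).trans_le (solvesRules_derivedLanguage g r₀ hr₀)
  · exact hJ r hr

/-- `u` is one of the right-hand sides allowed in Chomsky normal form. -/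
def IsCNFOutput (u : List (Symbol T N)) : Prop :=
  (∃ B C : N, u = [nonterminal B, nonterminal C]) ∨ ∃ t : T, u = [terminal t]

lemma IsCNFOutput.renameForm {u : List (Symbol T N)} (hu : IsCNFOutput u) (f : N → N') :
    IsCNFOutput (renameForm f u) := by
  obtain ⟨B, C, rfl⟩ | ⟨t, rfl⟩ := hu
  · exact .inl ⟨f B, f C, rfl⟩
  · exact .inr ⟨t, rfl⟩

end Extension

section BalancedPowers

variable {T N : Type*}

lemma mul_pow_mul_pow_mul {M : Type*} [Monoid M] (x y : M) (c : ℕ) :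
    x * (x ^ c * y ^ c * y) = x ^ (c + 1) * y ^ (c + 1) := by
  rw [pow_succ' x, pow_succ y]
  simp only [mul_assoc]

/-- The language `⋃_{c ≥ 1} K^c L^c`. -/
def balancedPowers (K L : Language T) : Language T :=
  ⨆ c : ℕ, K ^ (c + 1) * L ^ (c + 1)

lemma mul_le_balancedPowers (K L : Language T) : K * L ≤ balancedPowers K L :=
  le_iSup_of_le 0 (by simp only [zero_add, pow_one, le_refl])

lemma mul_balancedPowers_mul_le (K L : Language T) :
    K * (balancedPowers K L * L) ≤ balancedPowers K L := by
  rw [balancedPowers, Language.iSup_mul, Language.mul_iSup]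
  exact iSup_le fun c => le_iSup_of_le (c + 1) (mul_pow_mul_pow_mul K L (c + 1)).le

lemma balancedPowers_le {K L P : Language T} (hbase : K * L ≤ P) (hstep : K * (P * L) ≤ P) :
    balancedPowers K L ≤ P := by
  refine iSup_le fun c => ?_
  induction c with
  | zero => simpa only [zero_add, pow_one] using hbase
  | succ c ih =>
    calc K ^ (c + 1 + 1) * L ^ (c + 1 + 1) = K * (K ^ (c + 1) * L ^ (c + 1) * L) :=
          (mul_pow_mul_pow_mul K L (c + 1)).symm
      _ ≤ K * (P * L) := by gcongr
      _ ≤ P := hstep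

lemma letter_pow (x : T) (n : ℕ) : ({[x]} : Language T) ^ n = {List.replicate n x} := by
  induction n with
  | zero => rfl
  | succ n ih =>
    rw [pow_succ', ih, Language.mul_def]
    exact Set.image2_singleton

lemma mem_balancedPowers_letter {x y : T} {w : List T} :
    w ∈ balancedPowers ({[x]} : Language T) {[y]} ↔
      ∃ c, 1 ≤ c ∧ List.replicate c x ++ List.replicate c y = w := by
  have hpow (c : ℕ) : w ∈ ({[x]} : Language T) ^ c * {[y]} ^ c ↔
      List.replicate c x ++ List.replicate c y = w := by
    rw [letter_pow, letter_pow, Language.mul_def]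
    exact (Set.ext_iff.1 Set.image2_singleton w).trans eq_comm
  simp only [balancedPowers, Language.mem_iSup, hpow]
  exact ⟨fun ⟨c, hc⟩ => ⟨c + 1, c.succ_pos, hc⟩,
    fun ⟨c, hpos, hc⟩ => ⟨c - 1, by rwa [Nat.sub_add_cancel hpos]⟩⟩

/-- The languages of the two new nonterminals in `balancedRules`. -/
def balancedSolution (K L : Language T) : Bool → Language T
  | false => balancedPowers K L
  | true => balancedPowers K L * L

open scoped Classical in
/-- The rules `P → A B | A Q` and `Q → P B`, which generate the balanced powers of the languages
of `A` and `B`. The new nonterminals are `P = .inr false` and `Q = .inr true`. -/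
noncomputable def balancedRules (A B : N) : Finset (ContextFreeRule T (N ⊕ Bool)) :=
  {⟨.inr false, [nonterminal (.inl A), nonterminal (.inl B)]⟩,
    ⟨.inr false, [nonterminal (.inl A), nonterminal (.inr true)]⟩,
    ⟨.inr true, [nonterminal (.inr false), nonterminal (.inl B)]⟩}

lemma isCNFOutput_of_mem_balancedRules {A B : N} {r : ContextFreeRule T (N ⊕ Bool)}
    (hr : r ∈ balancedRules A B) : IsCNFOutput r.output := by
  simp only [balancedRules, Finset.mem_insert, Finset.mem_singleton] at hr
  rcases hr with rfl | rfl | rfl <;> exact .inl ⟨_, _, rfl⟩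

lemma formLanguage_le_of_mem_balancedRules (I : N → Language T) {A B : N}
    {r : ContextFreeRule T (N ⊕ Bool)} (hr : r ∈ balancedRules A B) :
    formLanguage (Sum.elim I (balancedSolution (I A) (I B))) r.output ≤
      Sum.elim I (balancedSolution (I A) (I B)) r.input := by
  simp only [balancedRules, Finset.mem_insert, Finset.mem_singleton] at hr
  rcases hr with rfl | rfl | rfl <;> rw [formLanguage_pair]
  · exact mul_le_balancedPowers _ _
  · exact mul_balancedPowers_mul_le _ _
  · exact le_rfl

lemma balancedSolution_le_derivedLanguage (g : ContextFreeGrammar T) (A B : g.NT) (b : Bool) :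
    balancedSolution (derivedLanguage g A) (derivedLanguage g B) b ≤
      derivedLanguage (extendGrammar g (balancedRules A B)) (.inr b) := by
  let D : g.NT ⊕ Bool → Language T := derivedLanguage (extendGrammar g (balancedRules A B))
  have hprod {X Y Z : g.NT ⊕ Bool}
      (hr : ⟨X, [nonterminal Y, nonterminal Z]⟩ ∈ balancedRules (T := T) A B) :
      D Y * D Z ≤ D X := by
    have hrule := formLanguage_le_derivedLanguage_extendGrammar hr
    exact (formLanguage_pair D Y Z).ge.trans hrule
  have hA : derivedLanguage g A ≤ D (.inl A) := derivedLanguage_le_extendGrammar _ A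
  have hB : derivedLanguage g B ≤ D (.inl B) := derivedLanguage_le_extendGrammar _ B
  have hbase : D (.inl A) * D (.inl B) ≤ D (.inr false) := hprod (by simp [balancedRules])
  have hopen : D (.inl A) * D (.inr true) ≤ D (.inr false) := hprod (by simp [balancedRules])
  have hclose : D (.inr false) * D (.inl B) ≤ D (.inr true) := hprod (by simp [balancedRules])
  have hQ : D (.inr false) * derivedLanguage g B ≤ D (.inr true) :=
    (mul_le_mul' le_rfl hB).trans hclose
  have hP : balancedPowers (derivedLanguage g A) (derivedLanguage g B) ≤ D (.inr false) :=
    balancedPowers_le ((mul_le_mul' hA hB).trans hbase) ((mul_le_mul' hA hQ).trans hopen)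
  cases b with
  | false => exact hP
  | true => exact (mul_le_mul' hP le_rfl).trans hQ

end BalancedPowers

section Definability

variable {T : Type} {d d' : ℕ} {F F' : Set (Language T)} {K L : Language T}

/-- Some grammar in Chomsky normal form with at most `d` nonterminals derives every language of
the family `F` from one of its nonterminals. -/
def CNFDefinable (d : ℕ) (F : Set (Language T)) : Prop :=
  ∃ (g : ContextFreeGrammar T) (_ : Fintype g.NT),
    g.IsCNF ∧ Fintype.card g.NT ≤ d ∧ F ⊆ Set.range (derivedLanguage g)

lemma CNFDefinable.mono (hF : CNFDefinable d F) (hd : d ≤ d') (h : F' ⊆ F) :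
    CNFDefinable d' F' :=
  let ⟨g, hfin, hg, hcard, hFg⟩ := hF
  ⟨g, hfin, hg, hcard.trans hd, h.trans hFg⟩

lemma CNFDefinable.exists_grammar (hF : CNFDefinable d F) (hL : L ∈ F) :
    ∃ (g : ContextFreeGrammar T) (_ : Fintype g.NT),
      g.IsCNF ∧ g.language = L ∧ Fintype.card g.NT ≤ d := by
  obtain ⟨g, hfin, hg, hd, hFg⟩ := hF
  obtain ⟨A, rfl⟩ := hFg hL
  exact ⟨{ g with initial := A }, hfin, hg, rfl, hd⟩

lemma cnfDefinable_letter (x : T) : CNFDefinable 1 {({[x]} : Language T)} := by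
  let g : ContextFreeGrammar T := ⟨Unit, (), {⟨(), [terminal x]⟩}⟩
  have hsolves : SolvesRules g fun _ => {[x]} := fun r hr => by
    obtain rfl := Finset.mem_singleton.1 hr
    exact (formLanguage_singleton_terminal _ x).le
  have hg : derivedLanguage g = fun _ => {[x]} := hsolves.derivedLanguage_eq fun _ =>
    (formLanguage_singleton_terminal _ x).ge.trans
      (solvesRules_derivedLanguage g _ (Finset.mem_singleton_self _))
  refine ⟨g, inferInstanceAs (Fintype Unit), fun r hr => ?_, le_rfl, ?_⟩
  · obtain rfl := Finset.mem_singleton.1 hr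
    exact .inr ⟨x, rfl⟩
  · rintro _ rfl
    exact ⟨(), congrFun hg ()⟩

lemma cnfDefinable_extendGrammar {g : ContextFreeGrammar T} [Fintype g.NT] {M : Type} [Fintype M]
    {R : Finset (ContextFreeRule T (g.NT ⊕ M))} {J : M → Language T} (hg : g.IsCNF)
    (hR : ∀ r ∈ R, IsCNFOutput r.output)
    (hJ : ∀ r ∈ R, formLanguage (Sum.elim (derivedLanguage g) J) r.output ≤
      Sum.elim (derivedLanguage g) J r.input)
    (hle : ∀ B, J B ≤ derivedLanguage (extendGrammar g R) (.inr B)) :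
    CNFDefinable (Fintype.card g.NT + Fintype.card M)
      (Set.range (derivedLanguage g) ∪ Set.range J) := by
  refine ⟨extendGrammar g R, inferInstanceAs (Fintype (g.NT ⊕ M)), fun r hr => ?_,
    Fintype.card_sum.le, ?_⟩
  · obtain ⟨r₀, hr₀, rfl⟩ | hr := mem_rules_extendGrammar.1 hr
    · exact IsCNFOutput.renameForm (hg r₀ hr₀) _
    · exact hR r hr
  · rw [derivedLanguage_extendGrammar hJ hle]
    exact (Set.Sum.elim_range _ _).ge

lemma cnfDefinable_insert_formLanguage {g : ContextFreeGrammar T} [Fintype g.NT] (hg : g.IsCNF)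
    {u : List (Symbol T g.NT)} (hu : IsCNFOutput u) :
    CNFDefinable (Fintype.card g.NT + 1)
      (insert (formLanguage (derivedLanguage g) u) (Set.range (derivedLanguage g))) := by
  let rule : ContextFreeRule T (g.NT ⊕ Unit) := ⟨.inr (), renameForm .inl u⟩
  have h := cnfDefinable_extendGrammar (R := {rule})
    (J := fun _ => formLanguage (derivedLanguage g) u) hg ?_ ?_ ?_
  · exact h.mono le_rfl (Set.insert_subset (.inr ⟨(), rfl⟩) Set.subset_union_left)
  · rintro r hr
    obtain rfl := Finset.mem_singleton.1 hr
    exact hu.renameForm _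
  · rintro r hr
    obtain rfl := Finset.mem_singleton.1 hr
    exact (formLanguage_renameForm _ _ u).le
  · intro _
    calc formLanguage (derivedLanguage g) u
        ≤ formLanguage (fun A => derivedLanguage (extendGrammar g {rule}) (.inl A)) u :=
          formLanguage_mono (derivedLanguage_le_extendGrammar {rule}) u
      _ = formLanguage (derivedLanguage (extendGrammar g {rule})) rule.output :=
          (formLanguage_renameForm Sum.inl (derivedLanguage (extendGrammar g {rule})) u).symm
      _ ≤ derivedLanguage (extendGrammar g {rule}) (.inr ()) :=
          formLanguage_le_derivedLanguage_extendGrammar (Finset.mem_singleton_self rule)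

lemma CNFDefinable.insert_letter (hF : CNFDefinable d F) (x : T) :
    CNFDefinable (d + 1) (insert {[x]} F) := by
  obtain ⟨g, _, hg, hd, hFg⟩ := hF
  have h := cnfDefinable_insert_formLanguage hg (.inr ⟨x, rfl⟩)
  rw [formLanguage_singleton_terminal] at h
  exact h.mono (Nat.succ_le_succ hd) (Set.insert_subset_insert hFg)

lemma CNFDefinable.insert_mul (hF : CNFDefinable d F) (hK : K ∈ F) (hL : L ∈ F) :
    CNFDefinable (d + 1) (insert (K * L) F) := by
  obtain ⟨g, _, hg, hd, hFg⟩ := hF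
  obtain ⟨A, rfl⟩ := hFg hK
  obtain ⟨B, rfl⟩ := hFg hL
  have h := cnfDefinable_insert_formLanguage hg (.inl ⟨A, B, rfl⟩)
  rw [formLanguage_pair] at h
  exact h.mono (Nat.succ_le_succ hd) (Set.insert_subset_insert hFg)

lemma CNFDefinable.insert_balancedPowers (hF : CNFDefinable d F) (hK : K ∈ F) (hL : L ∈ F) :
    CNFDefinable (d + 2) (insert (balancedPowers K L) F) := by
  obtain ⟨g, _, hg, hd, hFg⟩ := hF
  obtain ⟨A, rfl⟩ := hFg hK
  obtain ⟨B, rfl⟩ := hFg hL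
  have h := cnfDefinable_extendGrammar hg (fun _ => isCNFOutput_of_mem_balancedRules)
    (fun _ => formLanguage_le_of_mem_balancedRules (derivedLanguage g))
    (balancedSolution_le_derivedLanguage g A B)
  exact h.mono (Nat.add_le_add_right hd 2)
    (Set.insert_subset (.inr ⟨false, rfl⟩) (hFg.trans Set.subset_union_left))

lemma cnfDefinable_pow_two_pow (x : T) (n : ℕ) :
    CNFDefinable (n + 1) {({[x]} : Language T), {[x]} ^ 2 ^ n} := by
  induction n with
  | zero => simpa only [zero_add, pow_zero, pow_one, Set.pair_eq_singleton] using
      cnfDefinable_letter x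
  | succ n ih =>
    have h := ih.insert_mul (K := {[x]} ^ 2 ^ n) (L := {[x]} ^ 2 ^ n) (by simp) (by simp)
    rw [← pow_add, ← two_mul, ← pow_succ'] at h
    exact h.mono le_rfl (by grind)

end Definability

section BlockWord

variable {T : Type*}

/-- The word `a_1^{f 0 + f 1} a_2^{f 1 + f 2} ⋯ a_m^{f (m-1) + f m}`; the words of `L̃_n` are those
with `f 0 = 2^n`, `f m = 0` and positive entries in between. -/
def blockWord {m : ℕ} (a : Fin m → T) (f : ℕ → ℕ) : List T :=
  (List.ofFn fun i : Fin m => List.replicate (f i.val + f (i.val + 1)) (a i)).flatten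

lemma blockWord_succ {m : ℕ} (a : Fin (m + 1) → T) (f : ℕ → ℕ) :
    blockWord a f = blockWord (a ∘ Fin.castSucc) f ++
      List.replicate (f m + f (m + 1)) (a (Fin.last m)) := by
  rw [blockWord, List.ofFn_succ_last, List.flatten_concat]
  rfl

lemma blockWord_congr {m : ℕ} (a : Fin m → T) {f f' : ℕ → ℕ} (h : ∀ j ≤ m, f j = f' j) :
    blockWord a f = blockWord a f' := by
  have hblock (i : Fin m) : f i + f (i + 1) = f' i + f' (i + 1) := by
    rw [h i i.is_lt.le, h (i + 1) i.is_lt]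
  simp only [blockWord, hblock]

-- The exponent `f (k + 1)` is shared by the last two blocks and can be split off from both.
lemma blockWord_eq_append {k : ℕ} (a : Fin (k + 2) → T) {f f' : ℕ → ℕ}
    (hff' : ∀ j ≤ k, f j = f' j) (hf : f (k + 2) = 0) (hf' : f' (k + 1) = 0) :
    blockWord a f = blockWord (a ∘ Fin.castSucc) f' ++
      (List.replicate (f (k + 1)) (a (Fin.last k).castSucc) ++
        List.replicate (f (k + 1)) (a (Fin.last (k + 1)))) := by
  rw [blockWord_succ a, blockWord_succ (a ∘ Fin.castSucc) f, blockWord_succ (a ∘ Fin.castSucc) f',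
    blockWord_congr _ hff', hff' k le_rfl, hf, hf', List.replicate_add]
  simp only [Function.comp_apply, add_zero, List.append_assoc]

end BlockWord

section LtildeLang

variable {T : Type}

lemma ltildeLang_one (n : ℕ) (a : Fin 1 → T) : LtildeLang 1 n a = {[a 0]} ^ 2 ^ n := by
  have hword (f : ℕ → ℕ) : blockWord a f = List.replicate (f 0 + f 1) (a 0) := by
    simp [blockWord]
  rw [letter_pow]
  ext w
  constructor
  · rintro ⟨f, h0, -, h1, rfl⟩
    exact (hword f).trans (by rw [h0, h1, add_zero])
  · rintro rfl
    let f (j : ℕ) := if j = 0 then 2 ^ n else 0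
    exact ⟨f, rfl, by lia, rfl, (hword f).symm⟩

lemma ltildeLang_add_two (k n : ℕ) (a : Fin (k + 2) → T) :
    LtildeLang (k + 2) n a = LtildeLang (k + 1) n (a ∘ Fin.castSucc) *
      balancedPowers {[a (Fin.last k).castSucc]} {[a (Fin.last (k + 1))]} := by
  ext w
  rw [Language.mem_mul]
  constructor
  · rintro ⟨f, h0, hpos, hlast, rfl⟩
    refine ⟨_, ⟨Function.update f (k + 1) 0, by grind, by grind, by grind, rfl⟩, _,
      mem_balancedPowers_letter.2 ⟨f (k + 1), hpos _ (by lia) le_rfl, rfl⟩, ?_⟩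
    exact (blockWord_eq_append a (by grind) hlast (by grind)).symm
  · rintro ⟨_, ⟨f', h0, hpos, hlast, rfl⟩, v, hv, rfl⟩
    obtain ⟨c, hc, rfl⟩ := mem_balancedPowers_letter.1 hv
    let f := Function.update (Function.update f' (k + 1) c) (k + 2) 0
    have hf : f (k + 1) = c := by grind
    refine ⟨f, by grind, by grind, by grind, ?_⟩
    rw [← hf]
    exact (blockWord_eq_append a (by grind) (by grind) hlast).symm

lemma cnfDefinable_ltildeLang (k n : ℕ) (a : Fin (k + 1) → T) :
    CNFDefinable (n + 4 * k + 1) {{[a (Fin.last k)]}, LtildeLang (k + 1) n a} := by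
  induction k with
  | zero => exact ltildeLang_one n a ▸ cnfDefinable_pow_two_pow (a 0) n
  | succ k ih =>
    have hletter := (ih (a ∘ Fin.castSucc)).insert_letter (a (Fin.last (k + 1)))
    have hpairs := hletter.insert_balancedPowers (K := {[a (Fin.last k).castSucc]})
      (L := {[a (Fin.last (k + 1))]}) (by simp) (by simp)
    have hword := hpairs.insert_mul (K := LtildeLang (k + 1) n (a ∘ Fin.castSucc))
      (L := balancedPowers {[a (Fin.last k).castSucc]} {[a (Fin.last (k + 1))]})
      (by simp) (by simp)
    rw [← ltildeLang_add_two] at hword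
    exact hword.mono (by lia) (by grind)

end LtildeLang

theorem stmt_7_general {T : Type} {m : ℕ} (hm : 1 ≤ m) (a : Fin m → T) (n : ℕ) :
    ∃ (g : ContextFreeGrammar T) (_ : Fintype g.NT),
      g.IsCNF ∧
      g.language = LtildeLang m n a ∧
      Fintype.card g.NT ≤ n + 4 * m - 3 := by
  obtain ⟨k, rfl⟩ := Nat.exists_eq_add_of_le' hm
  exact ((cnfDefinable_ltildeLang k n a).mono (by lia) subset_rfl).exists_grammar (by simp)

theorem stmt_7 {T : Type} {m : ℕ} (hm : 2 ≤ m) (a : Fin m → T) (ha : Function.Injective a)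
    (n : ℕ) (hn : 1 ≤ n) :
    ∃ (g : ContextFreeGrammar T) (_ : Fintype g.NT),
      g.IsCNF ∧
      g.language = LtildeLang m n a ∧
      Fintype.card g.NT ≤ n + 4 * m - 3 :=
  stmt_7_general (Nat.one_le_of_lt hm) a n
end

section
/- For every integer n ≥ 2, every nondeterministic finite automaton accepting exactly the unary language L'_n = { a^t : t ≥ 0, t ≡ 0 (mod n), and t ≡ 0 (mod n+1) } has at least n^2 + n states. -/
/-!
For every splitting `x ++ y` of an accepted word, pick the state that an accepting run reaches
after `x`. If the splittings `x ++ y` and `x' ++ y'` share this state, then their runs can be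
spliced, so `x ++ y'` and `x' ++ y` are accepted too. When `m` divides the length of every accepted
word, the `m` splittings of a nonempty accepted word after fewer than `m` letters cannot be spliced:
exchanging the suffixes changes the length by less than `m`.
-/

section

variable {α ι σ : Type*}

/-- An extended fooling set for the language `L`, in the sense of Birget: pairs of words
`(x i, y i)` whose number bounds from below the number of states of any NFA accepting `L`. The
condition that two distinct pairs cannot both be crossed within `L` is stated contrapositively. -/
structure IsFoolingFamily (L : Language α) (x y : ι → List α) : Prop where
  append_mem (i : ι) : x i ++ y i ∈ L
  eq_of_append_mem {i j : ι} : x i ++ y j ∈ L → x j ++ y i ∈ L → i = j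

theorem mem_acceptsFrom_iff_exists_singleton {M : NFA α σ} {S : Set σ} {x : List α} :
    x ∈ M.acceptsFrom S ↔ ∃ q ∈ S, x ∈ M.acceptsFrom {q} := by
  simp only [NFA.mem_acceptsFrom, NFA.mem_evalFrom_iff_exists (S := S)]
  tauto

theorem append_mem_accepts_iff_exists {M : NFA α σ} {x y : List α} :
    x ++ y ∈ M.accepts ↔ ∃ q ∈ M.eval x, y ∈ M.acceptsFrom {q} := by
  rw [NFA.accepts_eq_acceptsFrom_start, NFA.append_mem_acceptsFrom,
    mem_acceptsFrom_iff_exists_singleton, NFA.eval]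

theorem IsFoolingFamily.card_le_card_states [Fintype ι] [Fintype σ] {M : NFA α σ}
    {x y : ι → List α} (h : IsFoolingFamily M.accepts x y) :
    Fintype.card ι ≤ Fintype.card σ := by
  choose q hq_reached hq_accepts using fun i ↦ append_mem_accepts_iff_exists.1 (h.append_mem i)
  have splice {i j : ι} (hij : q i = q j) : x i ++ y j ∈ M.accepts :=
    append_mem_accepts_iff_exists.2 ⟨q i, hq_reached i, hij ▸ hq_accepts j⟩
  exact Fintype.card_le_of_injective q fun i j hij ↦
    h.eq_of_append_mem (splice hij) (splice hij.symm)

theorem length_take_append_drop_add {w : List α} {i j : ℕ} (hi : i ≤ w.length)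
    (hj : j ≤ w.length) : (w.take i ++ w.drop j).length + j = i + w.length := by
  simp only [List.length_append, List.length_take, List.length_drop]
  omega

theorem isFoolingFamily_take_drop {L : Language α} {m : ℕ} (hL : ∀ u ∈ L, m ∣ u.length)
    {w : List α} (hw : w ∈ L) (hw_ne : w ≠ []) :
    IsFoolingFamily L (fun i : Fin m ↦ w.take i) (fun i ↦ w.drop i) where
  append_mem i := by rwa [List.take_append_drop]
  eq_of_append_mem {i j} hij _ := by
    have hm_le : m ≤ w.length := Nat.le_of_dvd (List.length_pos_iff.2 hw_ne) (hL w hw)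
    have hmod : i ≡ j [MOD m] := calc
      (i : ℕ) ≡ i + w.length [MOD m] := (Nat.add_modEq_left_iff.2 (hL w hw)).symm
      _ = (w.take i ++ w.drop j).length + j :=
        (length_take_append_drop_add (i.2.le.trans hm_le) (j.2.le.trans hm_le)).symm
      _ ≡ j [MOD m] := Nat.add_modEq_right_iff.2 (hL _ hij)
    exact Fin.ext (hmod.eq_of_lt_of_lt i.2 j.2)

theorem le_card_states_of_forall_dvd_length [Fintype σ] {M : NFA α σ} {m : ℕ}
    (hM : ∀ u ∈ M.accepts, m ∣ u.length) {w : List α} (hw : w ∈ M.accepts) (hw_ne : w ≠ []) :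
    m ≤ Fintype.card σ := by
  simpa only [Fintype.card_fin] using (isFoolingFamily_take_drop hM hw hw_ne).card_le_card_states

theorem stmt_9_general [Nonempty α] [Fintype σ] (m k : ℕ) (M : NFA α σ)
    (hM : M.accepts = {w : List α | m ∣ w.length ∧ k ∣ w.length}) :
    m.lcm k ≤ Fintype.card σ := by
  have mem_accepts_iff (w : List α) : w ∈ M.accepts ↔ m.lcm k ∣ w.length := by
    rw [hM, Nat.lcm_dvd_iff]
    rfl
  obtain hzero | hpos := (m.lcm k).eq_zero_or_pos
  · exact hzero ▸ Nat.zero_le _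
  · let w : List α := List.replicate (m.lcm k) (Classical.arbitrary α)
    have hw : w ∈ M.accepts := (mem_accepts_iff w).2 (by rw [List.length_replicate])
    have hw_ne : w ≠ [] := List.length_pos_iff.1 (by rwa [List.length_replicate])
    exact le_card_states_of_forall_dvd_length (fun u ↦ (mem_accepts_iff u).1) hw hw_ne

end

theorem stmt_9 (n : ℕ) (hn : 2 ≤ n) (σ : Type) [Fintype σ] (M : NFA Unit σ)
    (hM : M.accepts = {w : List Unit | n ∣ w.length ∧ (n + 1) ∣ w.length}) :
    n ^ 2 + n ≤ Fintype.card σ := by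
  have hlcm : n.lcm (n + 1) = n ^ 2 + n := by
    rw [(Nat.coprime_self_add_right.2 n.coprime_one_right).lcm_eq_mul, mul_add_one, sq]
  exact hlcm ▸ stmt_9_general n (n + 1) M hM
end
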